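/- (Interior a priori bound.) There exist ε > 0 and C > 0 such that the following holds. Let U, V : [1,∞) × ℝ → ℂ be a smooth solution of the transformed Thirring system with U(ρ,·), V(ρ,·) Schwartz in y locally uniformly in ρ. Define 𝓔_int(ρ) = Σ_{k=0}^{3} ( ‖∂_y^k U(ρ,·)‖_{L²(ℝ)} + ‖∂_y^k V(ρ,·)‖_{L²(ℝ)} ) and M(ρ) = sup_{y ∈ ℝ} ( |U(ρ,y)|² + |V(ρ,y)|² )^{1/2}. If 𝓔_int(1) ≤ ε, then sup_{ρ ≥ 1} M(ρ) ≤ C 𝓔_int(1). -/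

import Mathlib

noncomputable section
open MeasureTheory

/-- Partial derivative in the first (ρ) variable. -/
def pρ (u : ℝ → ℝ → ℂ) : ℝ → ℝ → ℂ := fun ρ y => deriv (fun s => u s y) ρ
/-- Partial derivative in the second (y) variable. -/
def py (u : ℝ → ℝ → ℂ) : ℝ → ℝ → ℂ := fun ρ y => deriv (fun z => u ρ z) y

/-- The transformed Thirring system on [1,∞) × ℝ (coordinates (ρ,y)):
∂_ρ U + ρ⁻¹ ∂_y U = iV + iρ⁻¹|V|²U, ∂_ρ V - ρ⁻¹ ∂_y V = iU + iρ⁻¹|U|²V. -/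
def TransThirring (U V : ℝ → ℝ → ℂ) : Prop :=
  ∀ ρ y : ℝ, 1 ≤ ρ →
    pρ U ρ y + ((ρ⁻¹ : ℝ) : ℂ) * py U ρ y =
      Complex.I * V ρ y + Complex.I * ((ρ⁻¹ : ℝ) : ℂ) * (‖V ρ y‖ ^ 2 : ℝ) * U ρ y ∧
    pρ V ρ y - ((ρ⁻¹ : ℝ) : ℂ) * py V ρ y =
      Complex.I * U ρ y + Complex.I * ((ρ⁻¹ : ℝ) : ℂ) * (‖U ρ y‖ ^ 2 : ℝ) * V ρ y

/-- The interior energy 𝓔_int(ρ) = Σ_{k=0}^3 (‖∂_y^k U(ρ,·)‖_{L²} + ‖∂_y^k V(ρ,·)‖_{L²}). -/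
def Eint (U V : ℝ → ℝ → ℂ) (ρ : ℝ) : ℝ :=
  ∑ k ∈ Finset.range 4,
    (Real.sqrt (∫ y : ℝ, ‖deriv^[k] (U ρ) y‖ ^ 2) +
     Real.sqrt (∫ y : ℝ, ‖deriv^[k] (V ρ) y‖ ^ 2))

/-- M(ρ) = sup_y (|U(ρ,y)|² + |V(ρ,y)|²)^{1/2}. -/
def Mfun (U V : ℝ → ℝ → ℂ) (ρ : ℝ) : ℝ :=
  ⨆ y : ℝ, Real.sqrt (‖U ρ y‖ ^ 2 + ‖V ρ y‖ ^ 2)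

/-- U and all its derivatives are Schwartz in y, locally uniformly in ρ. -/
def SchwartzLocUnif (u : ℝ → ℝ → ℂ) : Prop :=
  ∀ (a b n : ℕ) (A : ℝ), ∃ C : ℝ, ∀ ρ ∈ Set.Icc (1 : ℝ) A, ∀ y : ℝ,
    |y| ^ n * ‖pρ^[a] (py^[b] u) ρ y‖ ≤ C

/-! ### Spatial part: decaying functions on the line -/

/-- Continuous with quadratic decay. -/
def Dec (f : ℝ → ℝ) : Prop := Continuous f ∧ ∃ C : ℝ, ∀ y, |f y| * (1 + y ^ 2) ≤ C

lemma Dec.integrable {f : ℝ → ℝ} (h : Dec f) : Integrable f := by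
  obtain ⟨hc, C, hC⟩ := h
  refine Integrable.mono' (g := fun y => C * (1 + y ^ 2)⁻¹)
    (integrable_inv_one_add_sq.const_mul C) hc.aestronglyMeasurable ?_
  refine Filter.Eventually.of_forall fun y => ?_
  have hp : (0 : ℝ) < 1 + y ^ 2 := by positivity
  rw [Real.norm_eq_abs, ← div_eq_mul_inv, le_div_iff₀ hp]
  exact hC y

lemma Dec.add {f g : ℝ → ℝ} (hf : Dec f) (hg : Dec g) : Dec (fun y => f y + g y) := by
  obtain ⟨hc, C, hC⟩ := hf
  obtain ⟨hc', C', hC'⟩ := hg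
  refine ⟨hc.add hc', C + C', fun y => ?_⟩
  have hp : (0 : ℝ) < 1 + y ^ 2 := by positivity
  nlinarith [hC y, hC' y, abs_add_le (f y) (g y)]

lemma Dec.bound {f : ℝ → ℝ} (hf : Dec f) : ∃ C : ℝ, ∀ y, |f y| ≤ C := by
  obtain ⟨hc, C, hC⟩ := hf
  refine ⟨C, fun y => ?_⟩
  nlinarith [hC y, abs_nonneg (f y), sq_nonneg y, mul_nonneg (abs_nonneg (f y)) (sq_nonneg y)]

lemma Dec.mul {f g : ℝ → ℝ} (hf : Dec f) (hg : Dec g) : Dec (fun y => f y * g y) := by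
  obtain ⟨B, hB⟩ := hf.bound
  obtain ⟨hc, C, hC⟩ := hf
  obtain ⟨hc', C', hC'⟩ := hg
  refine ⟨hc.mul hc', B * C', fun y => ?_⟩
  rw [abs_mul, mul_assoc]
  have hp : (0 : ℝ) < 1 + y ^ 2 := by positivity
  exact mul_le_mul (hB y) (hC' y) (by positivity) ((abs_nonneg _).trans (hB y))

lemma Dec.const_mul {f : ℝ → ℝ} (c : ℝ) (hf : Dec f) : Dec (fun y => c * f y) := by
  obtain ⟨hc, C, hC⟩ := hf
  refine ⟨hc.const_mul c, |c| * C, fun y => ?_⟩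
  rw [abs_mul, mul_assoc]
  exact mul_le_mul_of_nonneg_left (hC y) (abs_nonneg c)

lemma Dec.sub {f g : ℝ → ℝ} (hf : Dec f) (hg : Dec g) : Dec (fun y => f y - g y) := by
  have := hf.add (hg.const_mul (-1))
  refine (congrArg Dec ?_).mp this
  funext y; ring

lemma Dec.tendsto_bot {f : ℝ → ℝ} (hf : Dec f) : Filter.Tendsto f Filter.atBot (nhds 0) := by
  obtain ⟨hc, C, hC⟩ := hf
  have h1 : Filter.Tendsto (fun y : ℝ => C * (1 + y ^ 2)⁻¹) Filter.atBot (nhds 0) := by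
    have h2 : Filter.Tendsto (fun y : ℝ => 1 + y ^ 2) Filter.atBot Filter.atTop := by
      apply Filter.tendsto_atTop_add_const_left
      have := (Filter.tendsto_pow_atTop (α := ℝ) (n := 2) (by norm_num)).comp
        Filter.tendsto_neg_atBot_atTop
      refine this.congr fun y => by simp
    simpa using (Filter.Tendsto.inv_tendsto_atTop h2).const_mul C
  refine squeeze_zero_norm (fun y => ?_) h1
  have hp : (0 : ℝ) < 1 + y ^ 2 := by positivity
  rw [Real.norm_eq_abs, ← div_eq_mul_inv, le_div_iff₀ hp]
  exact hC y

lemma Dec.integral_deriv {f f' : ℝ → ℝ} (h : ∀ y, HasDerivAt f (f' y) y)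
    (hf : Dec f) (hf' : Dec f') : ∫ y, f' y = 0 :=
  integral_eq_zero_of_hasDerivAt_of_integrable h hf'.integrable hf.integrable

/-- A tower of spatial derivatives with decay. -/
structure Sl (u : ℕ → ℝ → ℂ) : Prop where
  d : ∀ k y, HasDerivAt (u k) (u (k+1) y) y
  dec : ∀ k, ∃ C : ℝ, ∀ y, ‖u k y‖ * (1 + y ^ 2) ≤ C

lemma Sl.cont {u : ℕ → ℝ → ℂ} (h : Sl u) (k : ℕ) : Continuous (u k) :=
  continuous_iff_continuousAt.mpr fun y => (h.d k y).continuousAt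

lemma Sl.re {u : ℕ → ℝ → ℂ} (h : Sl u) (k : ℕ) : Dec (fun y => (u k y).re) := by
  obtain ⟨C, hC⟩ := h.dec k
  refine ⟨Complex.continuous_re.comp (h.cont k), C, fun y => ?_⟩
  exact (mul_le_mul_of_nonneg_right (Complex.abs_re_le_norm _) (by positivity)).trans (hC y)

lemma Sl.im {u : ℕ → ℝ → ℂ} (h : Sl u) (k : ℕ) : Dec (fun y => (u k y).im) := by
  obtain ⟨C, hC⟩ := h.dec k
  refine ⟨Complex.continuous_im.comp (h.cont k), C, fun y => ?_⟩
  exact (mul_le_mul_of_nonneg_right (Complex.abs_im_le_norm _) (by positivity)).trans (hC y)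

lemma hasDerivAt_re {f : ℝ → ℂ} {f' : ℂ} {y : ℝ} (h : HasDerivAt f f' y) :
    HasDerivAt (fun z => (f z).re) f'.re y :=
  (Complex.reCLM.hasFDerivAt.comp_hasDerivAt y h)

lemma hasDerivAt_im {f : ℝ → ℂ} {f' : ℂ} {y : ℝ} (h : HasDerivAt f f' y) :
    HasDerivAt (fun z => (f z).im) f'.im y :=
  (Complex.imCLM.hasFDerivAt.comp_hasDerivAt y h)

/-- real inner product of complex numbers -/
def dt (a b : ℂ) : ℝ := a.re * b.re + a.im * b.im

lemma dt_self (a : ℂ) : dt a a = ‖a‖ ^ 2 := by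
  rw [Complex.sq_norm, Complex.normSq_apply]; rfl

lemma Sl.dt {u v : ℕ → ℝ → ℂ} (hu : Sl u) (hv : Sl v) (j k : ℕ) :
    Dec (fun y => dt (u j y) (v k y)) :=
  ((hu.re j).mul (hv.re k)).add ((hu.im j).mul (hv.im k))

lemma hasDerivAt_dt {f g : ℝ → ℂ} {f' g' : ℂ} {y : ℝ} (hf : HasDerivAt f f' y)
    (hg : HasDerivAt g g' y) :
    HasDerivAt (fun z => dt (f z) (g z)) (dt f' (g y) + dt (f y) g') y := by
  have := ((hasDerivAt_re hf).mul (hasDerivAt_re hg)).add ((hasDerivAt_im hf).mul (hasDerivAt_im hg))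
  refine this.congr_deriv ?_
  unfold dt; ring

/-- density -/
def W (u v : ℕ → ℝ → ℂ) (k : ℕ) (y : ℝ) : ℝ := ‖u k y‖ ^ 2 + ‖v k y‖ ^ 2

lemma W_nonneg (u v : ℕ → ℝ → ℂ) (k : ℕ) (y : ℝ) : 0 ≤ W u v k y := by unfold W; positivity

lemma W_eq (u v : ℕ → ℝ → ℂ) (k : ℕ) :
    W u v k = fun y => dt (u k y) (u k y) + dt (v k y) (v k y) := by
  funext y; simp only [dt_self]; rfl

lemma dec_W {u v : ℕ → ℝ → ℂ} (hu : Sl u) (hv : Sl v) (k : ℕ) : Dec (W u v k) := by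
  rw [W_eq]; exact (hu.dt hu k k).add (hv.dt hv k k)

lemma dt_cs (a b c d : ℂ) {m n : ℝ} (hm : 0 ≤ m) (hn : 0 ≤ n)
    (h1 : ‖a‖ ^ 2 + ‖b‖ ^ 2 = m ^ 2) (h2 : ‖c‖ ^ 2 + ‖d‖ ^ 2 = n ^ 2) :
    |dt a c + dt b d| ≤ m * n := by
  apply abs_le_of_sq_le_sq _ (by positivity)
  rw [mul_pow, ← h1, ← h2]
  simp only [← dt_self]
  unfold dt
  nlinarith [sq_nonneg (a.re * c.im - a.im * c.re), sq_nonneg (a.re * d.re - b.re * c.re),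
    sq_nonneg (a.re * d.im - b.im * c.re), sq_nonneg (a.im * d.re - b.re * c.im),
    sq_nonneg (a.im * d.im - b.im * c.im), sq_nonneg (b.re * d.im - b.im * d.re)]

lemma hasDerivAt_W {u v : ℕ → ℝ → ℂ} (hu : Sl u) (hv : Sl v) (k : ℕ) (y : ℝ) :
    HasDerivAt (W u v k) (2 * (dt (u k y) (u (k+1) y) + dt (v k y) (v (k+1) y))) y := by
  rw [W_eq]
  refine ((hasDerivAt_dt (hu.d k y) (hu.d k y)).add
    (hasDerivAt_dt (hv.d k y) (hv.d k y))).congr_deriv ?_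
  unfold dt; ring

lemma sup_W {u v : ℕ → ℝ → ℂ} (hu : Sl u) (hv : Sl v) (k : ℕ) (y : ℝ) :
    W u v k y ≤ (∫ z, W u v k z) + ∫ z, W u v (k+1) z := by
  have hd : Dec (fun y => 2 * (dt (u k y) (u (k+1) y) + dt (v k y) (v (k+1) y))) :=
    ((hu.dt hu k (k+1)).add (hv.dt hv k (k+1))).const_mul 2
  have h := integral_Iic_of_hasDerivAt_of_tendsto (a := y) (f := W u v k)
    (dec_W hu hv k).1.continuousAt.continuousWithinAt
    (fun x _ => hasDerivAt_W hu hv k x) hd.integrable.integrableOn (dec_W hu hv k).tendsto_bot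
  rw [sub_zero] at h
  rw [← h, ← integral_add (dec_W hu hv k).integrable (dec_W hu hv (k+1)).integrable]
  have hi := ((dec_W hu hv k).add (dec_W hu hv (k+1))).integrable
  calc _ ≤ ∫ z in Set.Iic y, (W u v k z + W u v (k+1) z) := by
        apply setIntegral_mono hd.integrable.integrableOn hi.integrableOn
        intro z
        have := dt_cs (u k z) (v k z) (u (k+1) z) (v (k+1) z) (Real.sqrt_nonneg (W u v k z))
          (Real.sqrt_nonneg (W u v (k+1) z)) (Real.sq_sqrt (W_nonneg ..)).symm
          (Real.sq_sqrt (W_nonneg ..)).symm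
        have h2 := (abs_le.mp this).2
        have h3 := Real.sq_sqrt (W_nonneg u v k z)
        have h4 := Real.sq_sqrt (W_nonneg u v (k+1) z)
        nlinarith [sq_nonneg (√(W u v k z) - √(W u v (k+1) z))]
    _ ≤ _ := by
        apply setIntegral_le_integral hi
        exact Filter.Eventually.of_forall fun z => add_nonneg (W_nonneg ..) (W_nonneg ..)

lemma gn_W {u v : ℕ → ℝ → ℂ} (hu : Sl u) (hv : Sl v) {K : ℝ} (hK : ∀ y, W u v 0 y ≤ K) :
    ∫ z, (W u v 1 z) ^ 2 ≤ 9 * K * ∫ z, W u v 2 z := by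
  have hG : ∀ y, HasDerivAt (fun y => W u v 1 y * (dt (u 0 y) (u 1 y) + dt (v 0 y) (v 1 y)))
      (2 * (dt (u 1 y) (u 2 y) + dt (v 1 y) (v 2 y)) * (dt (u 0 y) (u 1 y) + dt (v 0 y) (v 1 y))
        + W u v 1 y * (W u v 1 y + (dt (u 0 y) (u 2 y) + dt (v 0 y) (v 2 y)))) y := by
    intro y
    refine ((hasDerivAt_W hu hv 1 y).mul ((hasDerivAt_dt (hu.d 0 y) (hu.d 1 y)).add
      (hasDerivAt_dt (hv.d 0 y) (hv.d 1 y)))).congr_deriv ?_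
    simp only [W_eq, Pi.add_apply, zero_add, Nat.reduceAdd]
    ring
  have hD0 : Dec (fun y => W u v 1 y * (dt (u 0 y) (u 1 y) + dt (v 0 y) (v 1 y))) :=
    (dec_W hu hv 1).mul ((hu.dt hu 0 1).add (hv.dt hv 0 1))
  have hD1 : Dec (fun y => 2 * (dt (u 1 y) (u 2 y) + dt (v 1 y) (v 2 y)) *
        (dt (u 0 y) (u 1 y) + dt (v 0 y) (v 1 y))
        + W u v 1 y * (W u v 1 y + (dt (u 0 y) (u 2 y) + dt (v 0 y) (v 2 y)))) :=
    ((((hu.dt hu 1 2).add (hv.dt hv 1 2)).const_mul 2).mul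
      ((hu.dt hu 0 1).add (hv.dt hv 0 1))).add
      ((dec_W hu hv 1).mul ((dec_W hu hv 1).add ((hu.dt hu 0 2).add (hv.dt hv 0 2))))
  have hz := Dec.integral_deriv hG hD0 hD1
  have hsq : Dec (fun z => (W u v 1 z) ^ 2) := by
    simpa only [sq] using (dec_W hu hv 1).mul (dec_W hu hv 1)
  have hR := (hD1.const_mul 2).add ((dec_W hu hv 2).const_mul (9 * K))
  have := integral_mono hsq.integrable hR.integrable (fun z => ?_)
  · rw [integral_add (hD1.const_mul 2).integrable
      ((dec_W hu hv 2).const_mul (9 * K)).integrable, integral_const_mul, integral_const_mul,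
      hz] at this
    simpa using this
  · have hs : ∀ k, 0 ≤ √(W u v k z) := fun k => Real.sqrt_nonneg _
    have hq : ∀ k, W u v k z = √(W u v k z) ^ 2 := fun k => (Real.sq_sqrt (W_nonneg ..)).symm
    have c12 := dt_cs (u 1 z) (v 1 z) (u 2 z) (v 2 z) (hs 1) (hs 2) (hq 1) (hq 2)
    have c01 := dt_cs (u 0 z) (v 0 z) (u 1 z) (v 1 z) (hs 0) (hs 1) (hq 0) (hq 1)
    have c02 := dt_cs (u 0 z) (v 0 z) (u 2 z) (v 2 z) (hs 0) (hs 2) (hq 0) (hq 2)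
    have hK' := hK z
    rw [hq 0] at hK'
    dsimp only
    rw [hq 1, hq 2]
    have hs0 := hs 0
    have hs1 := hs 1
    have hs2 := hs 2
    clear hq hs
    generalize √(W u v 0 z) = n0 at *
    generalize √(W u v 1 z) = n1 at *
    generalize √(W u v 2 z) = n2 at *
    generalize dt (u 1 z) (u 2 z) + dt (v 1 z) (v 2 z) = A at *
    generalize dt (u 0 z) (u 1 z) + dt (v 0 z) (v 1 z) = B at *
    generalize dt (u 0 z) (u 2 z) + dt (v 0 z) (v 2 z) = D at *
    have h1 : -(A * B) ≤ n1 * n2 * (n0 * n1) := by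
      calc -(A * B) ≤ |A * B| := neg_le_abs _
        _ = |A| * |B| := abs_mul ..
        _ ≤ _ := mul_le_mul c12 c01 (abs_nonneg _) ((abs_nonneg _).trans c12)
    have h2 : - (n1 ^ 2 * D) ≤ n1 ^ 2 * (n0 * n2) := by
      have := (abs_le.mp c02).1
      nlinarith [sq_nonneg n1]
    have h3 : 0 ≤ (K - n0 ^ 2) * n2 ^ 2 := mul_nonneg (by linarith) (sq_nonneg _)
    nlinarith [sq_nonneg (n1 ^ 2 - 3 * (n0 * n2))]

/-! ### Nonlinear terms -/

open ComplexConjugate in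
/-- the `y`-derivatives of the cubic nonlinearity `|b|² a`, in terms of the jets -/
def NL (k : ℕ) (a b : ℕ → ℂ) : ℂ :=
  match k with
  | 0 => b 0 * conj (b 0) * a 0
  | 1 => b 1 * conj (b 0) * a 0 + b 0 * conj (b 1) * a 0 + b 0 * conj (b 0) * a 1
  | 2 => b 2 * conj (b 0) * a 0 + b 0 * conj (b 2) * a 0 + b 0 * conj (b 0) * a 2
      + 2 * (b 1 * conj (b 1) * a 0 + b 1 * conj (b 0) * a 1 + b 0 * conj (b 1) * a 1)
  | 3 => b 3 * conj (b 0) * a 0 + b 0 * conj (b 3) * a 0 + b 0 * conj (b 0) * a 3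
      + 3 * (b 2 * conj (b 1) * a 0 + b 2 * conj (b 0) * a 1 + b 1 * conj (b 2) * a 0
        + b 0 * conj (b 2) * a 1 + b 1 * conj (b 0) * a 2 + b 0 * conj (b 1) * a 2)
      + 6 * (b 1 * conj (b 1) * a 1)
  | _ => 0

lemma hasDerivAt_conj {f : ℝ → ℂ} {f' : ℂ} {y : ℝ} (h : HasDerivAt f f' y) :
    HasDerivAt (fun z => (starRingEnd ℂ) (f z)) ((starRingEnd ℂ) f') y :=
  (Complex.conjCLE.toContinuousLinearMap.hasFDerivAt.comp_hasDerivAt y h)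

lemma hasDerivAt_NL {u v : ℕ → ℝ → ℂ} (hu : ∀ k y, HasDerivAt (u k) (u (k+1) y) y)
    (hv : ∀ k y, HasDerivAt (v k) (v (k+1) y) y) (k : ℕ)
    (hk : k < 3) (y : ℝ) :
    HasDerivAt (fun z => NL k (fun j => u j z) (fun j => v j z))
      (NL (k+1) (fun j => u j y) (fun j => v j y)) y := by
  have cv := fun k => hasDerivAt_conj (hv k y)
  have T : ∀ i j l, HasDerivAt (fun z => v i z * (starRingEnd ℂ) (v j z) * u l z)
    ((v (i+1) y * (starRingEnd ℂ) (v j y) + v i y * (starRingEnd ℂ) (v (j+1) y)) * u l y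
      + v i y * (starRingEnd ℂ) (v j y) * u (l+1) y) y :=
    fun i j l => (((hv i y).mul (cv j)).mul (hu l y))
  interval_cases k
  · refine (T 0 0 0).congr_deriv ?_
    simp only [NL, zero_add]; ring
  · refine (((T 1 0 0).add (T 0 1 0)).add (T 0 0 1)).congr_deriv ?_
    simp only [NL, zero_add, Nat.reduceAdd]; ring
  · refine ((((T 2 0 0).add (T 0 2 0)).add (T 0 0 2)).add
      ((((T 1 1 0).add (T 1 0 1)).add (T 0 1 1)).const_mul 2)).congr_deriv ?_
    simp only [NL, zero_add, Nat.reduceAdd]; ring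

lemma continuous_NL {u v : ℕ → ℝ → ℂ} (hu : ∀ k, Continuous (u k)) (hv : ∀ k, Continuous (v k))
    (k : ℕ) : Continuous (fun z => NL k (fun j => u j z) (fun j => v j z)) := by
  unfold NL
  split
  all_goals fun_prop

lemma norm_tri (a b c : ℂ) {x y z : ℝ} (ha : ‖a‖ ≤ x) (hb : ‖b‖ ≤ y) (hc : ‖c‖ ≤ z) :
    ‖a * (starRingEnd ℂ) b * c‖ ≤ x * y * z := by
  rw [norm_mul, norm_mul, RCLike.norm_conj]
  have := norm_nonneg a
  have := norm_nonneg b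
  have := norm_nonneg c
  have hx : 0 ≤ x := by linarith
  have hy : 0 ≤ y := by linarith
  gcongr

lemma norm_NL0 (a b : ℕ → ℂ) (n : ℕ → ℝ) (ha : ∀ k, ‖a k‖ ≤ n k) (hb : ∀ k, ‖b k‖ ≤ n k) :
    ‖NL 0 a b‖ ≤ n 0 ^ 3 := by
  have := norm_tri _ _ _ (hb 0) (hb 0) (ha 0)
  simp only [NL]; linarith

lemma norm_NL1 (a b : ℕ → ℂ) (n : ℕ → ℝ) (ha : ∀ k, ‖a k‖ ≤ n k) (hb : ∀ k, ‖b k‖ ≤ n k) :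
    ‖NL 1 a b‖ ≤ 3 * n 0 ^ 2 * n 1 := by
  have T := fun i j l => norm_tri _ _ _ (hb i) (hb j) (ha l)
  simp only [NL]
  refine (norm_add₃_le).trans ?_
  linarith [T 1 0 0, T 0 1 0, T 0 0 1]

lemma norm_NL2 (a b : ℕ → ℂ) (n : ℕ → ℝ) (ha : ∀ k, ‖a k‖ ≤ n k) (hb : ∀ k, ‖b k‖ ≤ n k) :
    ‖NL 2 a b‖ ≤ 3 * n 0 ^ 2 * n 2 + 6 * n 0 * n 1 ^ 2 := by
  have T := fun i j l => norm_tri _ _ _ (hb i) (hb j) (ha l)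
  simp only [NL]
  refine (norm_add_le _ _).trans ?_
  rw [norm_mul]
  have h1 := (norm_add₃_le (a := b 2 * (starRingEnd ℂ) (b 0) * a 0)
    (b := b 0 * (starRingEnd ℂ) (b 2) * a 0) (c := b 0 * (starRingEnd ℂ) (b 0) * a 2))
  have h2 := (norm_add₃_le (a := b 1 * (starRingEnd ℂ) (b 1) * a 0)
    (b := b 1 * (starRingEnd ℂ) (b 0) * a 1) (c := b 0 * (starRingEnd ℂ) (b 1) * a 1))
  have h3 : ‖(2 : ℂ)‖ = 2 := by simp
  rw [h3]
  linarith [T 2 0 0, T 0 2 0, T 0 0 2, T 1 1 0, T 1 0 1, T 0 1 1]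

lemma norm_NL3 (a b : ℕ → ℂ) (n : ℕ → ℝ) (ha : ∀ k, ‖a k‖ ≤ n k) (hb : ∀ k, ‖b k‖ ≤ n k) :
    ‖NL 3 a b‖ ≤ 3 * n 0 ^ 2 * n 3 + 18 * n 0 * n 1 * n 2 + 6 * n 1 ^ 3 := by
  have T := fun i j l => norm_tri _ _ _ (hb i) (hb j) (ha l)
  simp only [NL]
  refine (norm_add₃_le).trans ?_
  rw [norm_mul, norm_mul]
  have h1 := (norm_add₃_le (a := b 3 * (starRingEnd ℂ) (b 0) * a 0)
    (b := b 0 * (starRingEnd ℂ) (b 3) * a 0) (c := b 0 * (starRingEnd ℂ) (b 0) * a 3))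
  have h2 : ‖b 2 * (starRingEnd ℂ) (b 1) * a 0 + b 2 * (starRingEnd ℂ) (b 0) * a 1
        + b 1 * (starRingEnd ℂ) (b 2) * a 0
        + b 0 * (starRingEnd ℂ) (b 2) * a 1 + b 1 * (starRingEnd ℂ) (b 0) * a 2
        + b 0 * (starRingEnd ℂ) (b 1) * a 2‖ ≤ 6 * n 0 * n 1 * n 2 := by
    refine (norm_add_le_of_le (norm_add_le_of_le (norm_add_le_of_le (norm_add_le_of_le
      (norm_add_le_of_le (T 2 1 0) (T 2 0 1)) (T 1 2 0)) (T 0 2 1)) (T 1 0 2)) (T 0 1 2)).trans ?_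
    linarith
  have h3 : ‖(3 : ℂ)‖ = 3 := by simp
  have h4 : ‖(6 : ℂ)‖ = 6 := by simp
  rw [h3, h4]
  linarith [T 3 0 0, T 0 3 0, T 0 0 3, T 1 1 1]

/-- Regularity data of one component of a flow. `u k` is the `k`-th `y`-derivative. -/
structure Reg (u : ℕ → ℝ → ℝ → ℂ) : Prop where
  d : ∀ k ρ y, 1 ≤ ρ → HasDerivAt (u k ρ) (u (k+1) ρ y) y
  c : ∀ k y, ContinuousOn (fun s => u k s y) (Set.Ici 1)
  dec : ∀ k A, ∃ C : ℝ, ∀ ρ ∈ Set.Icc (1:ℝ) A, ∀ y, ‖u k ρ y‖ * (1 + y ^ 2) ≤ C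
  pdec : ∀ k A, ∃ C : ℝ, ∀ ρ ∈ Set.Icc (1:ℝ) A, ∀ y, ‖pρ (u k) ρ y‖ ≤ C

lemma Reg.sl {u : ℕ → ℝ → ℝ → ℂ} (h : Reg u) {ρ : ℝ} (hρ : 1 ≤ ρ) : Sl (fun k => u k ρ) := by
  refine ⟨fun k y => h.d k ρ y hρ, fun k => ?_⟩
  obtain ⟨C, hC⟩ := h.dec k ρ
  exact ⟨C, fun y => hC ρ ⟨hρ, le_rfl⟩ y⟩

/-- The flow: regularity and the equations for the first four derivative levels. -/
structure ThFlow (u v : ℕ → ℝ → ℝ → ℂ) : Prop where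
  hu : Reg u
  hv : Reg v
  eu : ∀ k < 4, ∀ ρ y, 1 < ρ → HasDerivAt (fun s => u k s y)
    (-((ρ⁻¹ : ℝ) : ℂ) * u (k+1) ρ y + Complex.I * v k ρ y
      + Complex.I * ((ρ⁻¹ : ℝ) : ℂ) * NL k (fun j => u j ρ y) (fun j => v j ρ y)) ρ
  ev : ∀ k < 4, ∀ ρ y, 1 < ρ → HasDerivAt (fun s => v k s y)
    (((ρ⁻¹ : ℝ) : ℂ) * v (k+1) ρ y + Complex.I * u k ρ y
      + Complex.I * ((ρ⁻¹ : ℝ) : ℂ) * NL k (fun j => v j ρ y) (fun j => u j ρ y)) ρ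

/-- density along the flow -/
def P (u v : ℕ → ℝ → ℝ → ℂ) (k : ℕ) (ρ y : ℝ) : ℝ := W (fun j => u j ρ) (fun j => v j ρ) k y

/-- energies -/
def F (u v : ℕ → ℝ → ℝ → ℂ) (k : ℕ) (ρ : ℝ) : ℝ := ∫ y, P u v k ρ y

lemma dt_abs (a b : ℂ) : |dt a b| ≤ ‖a‖ * ‖b‖ := by
  apply abs_le_of_sq_le_sq _ (by positivity)
  rw [mul_pow, ← dt_self, ← dt_self]
  unfold dt
  nlinarith [sq_nonneg (a.re * b.im - a.im * b.re)]

lemma F_cont {u v : ℕ → ℝ → ℝ → ℂ} (h : ThFlow u v) (k : ℕ) (A : ℝ) :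
    ContinuousOn (F u v k) (Set.Icc 1 A) := by
  obtain ⟨C, hC⟩ := h.hu.dec k A
  obtain ⟨D, hD⟩ := h.hv.dec k A
  refine continuousOn_of_dominated (bound := fun y => (C ^ 2 + D ^ 2) * (1 + y ^ 2)⁻¹) ?_ ?_ ?_ ?_
  · intro ρ hρ
    exact (dec_W (h.hu.sl hρ.1) (h.hv.sl hρ.1) k).1.aestronglyMeasurable
  · intro ρ hρ
    refine Filter.Eventually.of_forall fun y => ?_
    have hp : (1 : ℝ) ≤ 1 + y ^ 2 := by nlinarith [sq_nonneg y]
    have hp0 : (0 : ℝ) < 1 + y ^ 2 := by linarith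
    rw [Real.norm_eq_abs, abs_of_nonneg (show 0 ≤ P u v k ρ y from W_nonneg ..), ← div_eq_mul_inv, le_div_iff₀ hp0]
    have h1 := pow_le_pow_left₀ (by positivity) (hC ρ hρ y) 2
    have h2 := pow_le_pow_left₀ (by positivity) (hD ρ hρ y) 2
    rw [mul_pow] at h1 h2
    have h3 : 1 + y ^ 2 ≤ (1 + y ^ 2) ^ 2 := by nlinarith
    unfold P W
    nlinarith [mul_le_mul_of_nonneg_left h3 (sq_nonneg ‖u k ρ y‖),
      mul_le_mul_of_nonneg_left h3 (sq_nonneg ‖v k ρ y‖)]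
  · exact integrable_inv_one_add_sq.const_mul _
  · refine Filter.Eventually.of_forall fun y => ?_
    have h1 := (h.hu.c k y).mono (Set.Icc_subset_Ici_self : Set.Icc 1 A ⊆ _)
    have h2 := (h.hv.c k y).mono (Set.Icc_subset_Ici_self : Set.Icc 1 A ⊆ _)
    exact (h1.norm.pow 2).add (h2.norm.pow 2)

lemma F_deriv {u v : ℕ → ℝ → ℝ → ℂ} (h : ThFlow u v) (k : ℕ) (hk : k < 4) {ρ : ℝ} (hρ : 1 < ρ) :
    ∃ d, HasDerivAt (F u v k) d ρ ∧ ∀ B : ℝ → ℝ, Integrable B →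
      (∀ y, 2 * (‖u k ρ y‖ * ‖NL k (fun j => u j ρ y) (fun j => v j ρ y)‖ +
        ‖v k ρ y‖ * ‖NL k (fun j => v j ρ y) (fun j => u j ρ y)‖) ≤ B y) →
      d ≤ ρ⁻¹ * ∫ y, B y := by
  have su := h.hu.sl hρ.le
  have sv := h.hv.sl hρ.le
  have key : Integrable (fun y => 2 * (dt (u k ρ y) (pρ (u k) ρ y) + dt (v k ρ y) (pρ (v k) ρ y)))
      ∧ HasDerivAt (F u v k)
        (∫ y, 2 * (dt (u k ρ y) (pρ (u k) ρ y) + dt (v k ρ y) (pρ (v k) ρ y))) ρ := by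
    obtain ⟨C, hC⟩ := h.hu.dec k (ρ + 1)
    obtain ⟨D, hD⟩ := h.hv.dec k (ρ + 1)
    obtain ⟨C', hC'⟩ := h.hu.pdec k (ρ + 1)
    obtain ⟨D', hD'⟩ := h.hv.pdec k (ρ + 1)
    have cu : Continuous (pρ (u k) ρ) := by
      have : pρ (u k) ρ = _ := funext fun y => (h.eu k hk ρ y hρ).deriv
      rw [this]
      have c1 := su.cont k
      have c2 := su.cont (k+1)
      have c3 := sv.cont k
      have c4 := continuous_NL su.cont sv.cont k
      fun_prop
    have cv : Continuous (pρ (v k) ρ) := by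
      have : pρ (v k) ρ = _ := funext fun y => (h.ev k hk ρ y hρ).deriv
      rw [this]
      have c1 := sv.cont k
      have c2 := sv.cont (k+1)
      have c3 := su.cont k
      have c4 := continuous_NL sv.cont su.cont k
      fun_prop
    have c1 := su.cont k
    have c3 := sv.cont k
    refine hasDerivAt_integral_of_dominated_loc_of_deriv_le (s := Set.Ioo 1 (ρ + 1))
      (bound := fun y => (2 * (C * C' + D * D')) * (1 + y ^ 2)⁻¹)
      (F' := fun s y => 2 * (dt (u k s y) (pρ (u k) s y) + dt (v k s y) (pρ (v k) s y)))
      (Ioo_mem_nhds hρ (by linarith)) ?_ ?_ ?_ ?_ ?_ ?_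
    · filter_upwards [Ioi_mem_nhds hρ] with s hs
      exact (dec_W (h.hu.sl (le_of_lt hs)) (h.hv.sl (le_of_lt hs)) k).1.aestronglyMeasurable
    · exact (dec_W su sv k).integrable
    · apply Continuous.aestronglyMeasurable
      unfold dt
      fun_prop
    · refine Filter.Eventually.of_forall fun y s hs => ?_
      have hs' : s ∈ Set.Icc 1 (ρ + 1) := ⟨hs.1.le, hs.2.le⟩
      have hp0 : (0 : ℝ) < 1 + y ^ 2 := by positivity
      rw [← div_eq_mul_inv, le_div_iff₀ hp0, Real.norm_eq_abs, abs_mul, abs_two]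
      have e1 := hC s hs' y
      have e2 := hD s hs' y
      have m1 := mul_le_mul e1 (hC' s hs' y) (norm_nonneg _) (le_trans (by positivity) e1)
      have m2 := mul_le_mul e2 (hD' s hs' y) (norm_nonneg _) (le_trans (by positivity) e2)
      have := abs_add_le (dt (u k s y) (pρ (u k) s y)) (dt (v k s y) (pρ (v k) s y))
      have a1 := dt_abs (u k s y) (pρ (u k) s y)
      have a2 := dt_abs (v k s y) (pρ (v k) s y)
      have := mul_le_mul_of_nonneg_right (this.trans (add_le_add a1 a2)) hp0.le
      linarith
    · exact integrable_inv_one_add_sq.const_mul _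
    · refine Filter.Eventually.of_forall fun y s hs => ?_
      have h1 := h.eu k hk s y hs.1
      have h2 := h.ev k hk s y hs.1
      rw [← h1.deriv] at h1
      rw [← h2.deriv] at h2
      refine (((hasDerivAt_dt h1 h1).add (hasDerivAt_dt h2 h2)).congr_of_eventuallyEq
        (Filter.Eventually.of_forall fun s => ?_)).congr_deriv ?_
      · simp only [P, W, Pi.add_apply, dt_self]
      · simp only [pρ, dt]; ring
  refine ⟨_, key.2, fun B hB hle => ?_⟩
  have hJ : ∀ y, HasDerivAt (fun y => dt (u k ρ y) (u k ρ y) - dt (v k ρ y) (v k ρ y))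
      (2 * (dt (u k ρ y) (u (k+1) ρ y) - dt (v k ρ y) (v (k+1) ρ y))) y := by
    intro y
    refine ((hasDerivAt_dt (su.d k y) (su.d k y)).sub
      (hasDerivAt_dt (sv.d k y) (sv.d k y))).congr_deriv ?_
    unfold dt; ring
  have hJd : Dec (fun y => 2 * (dt (u k ρ y) (u (k+1) ρ y) - dt (v k ρ y) (v (k+1) ρ y))) :=
    ((su.dt su k (k+1)).sub (sv.dt sv k (k+1))).const_mul 2
  have hz := Dec.integral_deriv hJ ((su.dt su k k).sub (sv.dt sv k k)) hJd
  have hm := integral_mono key.1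
    (((hJd.integrable.const_mul (-ρ⁻¹))).add (hB.const_mul ρ⁻¹)) (fun y => ?_)
  · rw [integral_add' (hJd.integrable.const_mul (-ρ⁻¹)) (hB.const_mul ρ⁻¹),
      integral_const_mul (-ρ⁻¹), integral_const_mul ρ⁻¹, hz, mul_zero, zero_add] at hm
    exact hm
  · have e1 : pρ (u k) ρ y = _ := (h.eu k hk ρ y hρ).deriv
    have e2 : pρ (v k) ρ y = _ := (h.ev k hk ρ y hρ).deriv
    simp only [Pi.add_apply]
    rw [e1, e2]
    have hl := hle y
    have hr : 0 < ρ⁻¹ := by positivity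
    have a1 := (abs_le.mp (dt_abs (u k ρ y)
      (Complex.I * NL k (fun j => u j ρ y) (fun j => v j ρ y)))).2
    have a2 := (abs_le.mp (dt_abs (v k ρ y)
      (Complex.I * NL k (fun j => v j ρ y) (fun j => u j ρ y)))).2
    rw [norm_mul, Complex.norm_I, one_mul] at a1 a2
    have b1 := mul_le_mul_of_nonneg_left
      ((mul_le_mul_of_nonneg_left (add_le_add a1 a2) zero_le_two).trans hl) hr.le
    refine le_trans (le_of_eq ?_) (add_le_add le_rfl b1)
    unfold dt
    simp only [Complex.add_re, Complex.add_im, Complex.mul_re, Complex.mul_im, Complex.neg_re,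
      Complex.neg_im, Complex.I_re, Complex.I_im, Complex.ofReal_re, Complex.ofReal_im]
    ring

/-! ### Growth of the energies -/

lemma gron {G : ℝ → ℝ} {T B b δ : ℝ} (hc : ContinuousOn G (Set.Icc 1 T))
    (hd : ∀ ρ ∈ Set.Ioo 1 T, ∃ d, HasDerivAt G d ρ ∧ d ≤ ρ⁻¹ * (δ * G ρ + B * ρ ^ b))
    (hb : δ < b) (hB : 0 ≤ B) :
    ∀ ρ ∈ Set.Icc 1 T, G ρ ≤ G 1 * ρ ^ δ + B / (b - δ) * ρ ^ b := by
  intro ρ hρ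
  have hbd : 0 < b - δ := by linarith
  have hder : ∀ s ∈ Set.Ioo 1 T, ∃ d, HasDerivAt
      (fun s => G s * s ^ (-δ) - B / (b - δ) * s ^ (b - δ)) d s ∧ d ≤ 0 := by
    intro s hs
    obtain ⟨d, h1, h2⟩ := hd s hs
    have hs0 : 0 < s := by linarith [hs.1]
    refine ⟨_, (h1.mul (Real.hasDerivAt_rpow_const (p := -δ) (Or.inl hs0.ne'))).sub
      ((Real.hasDerivAt_rpow_const (p := b - δ) (Or.inl hs0.ne')).const_mul _), ?_⟩
    have e1 : s ^ (-δ - 1) = s ^ (-δ) * s⁻¹ := by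
      rw [Real.rpow_sub hs0, Real.rpow_one]; rfl
    have e2 : s ^ (b - δ - 1) = s ^ b * s ^ (-δ) * s⁻¹ := by
      rw [Real.rpow_sub hs0, Real.rpow_one, ← Real.rpow_add hs0]; rfl
    rw [e1, e2]
    have e3 : B / (b - δ) * ((b - δ) * (s ^ b * s ^ (-δ) * s⁻¹)) = B * (s ^ b * s ^ (-δ) * s⁻¹) := by
      field_simp
    rw [e3]
    have := mul_le_mul_of_nonneg_right h2 (Real.rpow_pos_of_pos hs0 (-δ)).le
    linarith
  have hanti : AntitoneOn (fun s => G s * s ^ (-δ) - B / (b - δ) * s ^ (b - δ)) (Set.Icc 1 T) := by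
    apply antitoneOn_of_deriv_nonpos (convex_Icc 1 T)
    · have hne : ∀ x ∈ Set.Icc 1 T, x ≠ 0 := fun x hx => by
        have := hx.1; intro h0; rw [h0] at this; linarith
      exact (hc.mul (continuousOn_id.rpow_const fun x hx => Or.inl (hne x hx))).sub
        (continuousOn_const.mul (continuousOn_id.rpow_const fun x hx => Or.inl (hne x hx)))
    · rw [interior_Icc]
      intro s hs
      obtain ⟨d, h1, _⟩ := hder s hs
      exact h1.differentiableAt.differentiableWithinAt
    · rw [interior_Icc]
      intro s hs
      obtain ⟨d, h1, h2⟩ := hder s hs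
      rw [h1.deriv]; exact h2
  have := hanti ⟨le_rfl, hρ.1.trans hρ.2⟩ hρ hρ.1
  simp only [Real.one_rpow, mul_one] at this
  have hρ0 : 0 < ρ := by linarith [hρ.1]
  have hp := Real.rpow_pos_of_pos hρ0 δ
  have h3 : G ρ * ρ ^ (-δ) - B / (b - δ) * ρ ^ (b - δ) ≤ G 1 := by
    have : 0 ≤ B / (b - δ) := by positivity
    linarith
  have h4 := mul_le_mul_of_nonneg_right h3 hp.le
  have e1 : ρ ^ (-δ) * ρ ^ δ = 1 := by rw [← Real.rpow_add hρ0]; simp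
  have e2 : ρ ^ (b - δ) * ρ ^ δ = ρ ^ b := by rw [← Real.rpow_add hρ0]; simp
  have e3 : (G ρ * ρ ^ (-δ) - B / (b - δ) * ρ ^ (b - δ)) * ρ ^ δ
      = G ρ * (ρ ^ (-δ) * ρ ^ δ) - B / (b - δ) * (ρ ^ (b - δ) * ρ ^ δ) := by ring
  rw [e3, e1, e2] at h4
  linarith

lemma P_nonneg (u v : ℕ → ℝ → ℝ → ℂ) (k : ℕ) (ρ y : ℝ) : 0 ≤ P u v k ρ y := W_nonneg ..

lemma F_nonneg (u v : ℕ → ℝ → ℝ → ℂ) (k : ℕ) (ρ : ℝ) : 0 ≤ F u v k ρ :=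
  integral_nonneg fun _ => P_nonneg ..

lemma sup_P {u v : ℕ → ℝ → ℝ → ℂ} (h : ThFlow u v) (k : ℕ) {ρ : ℝ} (hρ : 1 ≤ ρ) (y : ℝ) :
    P u v k ρ y ≤ F u v k ρ + F u v (k+1) ρ :=
  sup_W (h.hu.sl hρ) (h.hv.sl hρ) k y

lemma dec_P {u v : ℕ → ℝ → ℝ → ℂ} (h : ThFlow u v) (k : ℕ) {ρ : ℝ} (hρ : 1 ≤ ρ) :
    Dec (P u v k ρ) := dec_W (h.hu.sl hρ) (h.hv.sl hρ) k

lemma norm_le_sqrtP_left (u v : ℕ → ℝ → ℝ → ℂ) (k : ℕ) (ρ y : ℝ) :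
    ‖u k ρ y‖ ≤ √(P u v k ρ y) := by
  apply Real.le_sqrt_of_sq_le
  unfold P W
  nlinarith [sq_nonneg ‖v k ρ y‖]

lemma norm_le_sqrtP_right (u v : ℕ → ℝ → ℝ → ℂ) (k : ℕ) (ρ y : ℝ) :
    ‖v k ρ y‖ ≤ √(P u v k ρ y) := by
  apply Real.le_sqrt_of_sq_le
  unfold P W
  nlinarith [sq_nonneg ‖u k ρ y‖]

/-- pointwise bound of the production term -/
lemma prod_le (u v : ℕ → ℝ → ℝ → ℂ) (k : ℕ) (ρ y : ℝ) {b : ℝ}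
    (h1 : ‖NL k (fun j => u j ρ y) (fun j => v j ρ y)‖ ≤ b)
    (h2 : ‖NL k (fun j => v j ρ y) (fun j => u j ρ y)‖ ≤ b) :
    2 * (‖u k ρ y‖ * ‖NL k (fun j => u j ρ y) (fun j => v j ρ y)‖ +
        ‖v k ρ y‖ * ‖NL k (fun j => v j ρ y) (fun j => u j ρ y)‖) ≤ 4 * √(P u v k ρ y) * b := by
  have a1 := mul_le_mul (norm_le_sqrtP_left u v k ρ y) h1 (norm_nonneg _) (Real.sqrt_nonneg _)
  have a2 := mul_le_mul (norm_le_sqrtP_right u v k ρ y) h2 (norm_nonneg _) (Real.sqrt_nonneg _)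
  linarith

lemma F0_deriv {u v : ℕ → ℝ → ℝ → ℂ} (h : ThFlow u v) {ρ : ℝ} (hρ : 1 < ρ) {K : ℝ}
    (hK : ∀ y, P u v 0 ρ y ≤ K) :
    ∃ d, HasDerivAt (F u v 0) d ρ ∧ d ≤ ρ⁻¹ * (4 * K * F u v 0 ρ) := by
  obtain ⟨d, h1, h2⟩ := F_deriv h 0 (by norm_num) hρ
  refine ⟨d, h1, ?_⟩
  have := h2 (fun y => 4 * K * P u v 0 ρ y) ((dec_P h 0 hρ.le).const_mul _).integrable ?_
  · rwa [integral_const_mul] at this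
  · intro y
    have hl := norm_le_sqrtP_left u v (ρ := ρ) (y := y)
    have hr := norm_le_sqrtP_right u v (ρ := ρ) (y := y)
    refine (prod_le u v 0 ρ y (norm_NL0 _ _ (fun k => √(P u v k ρ y)) hl hr)
      (norm_NL0 _ _ (fun k => √(P u v k ρ y)) hr hl)).trans ?_
    have q0 := Real.sq_sqrt (P_nonneg u v 0 ρ y)
    have hK' := hK y
    rw [← q0] at hK' ⊢
    rw [Real.sqrt_sq (Real.sqrt_nonneg _)]
    nlinarith [mul_nonneg (sub_nonneg.2 hK') (sq_nonneg √(P u v 0 ρ y))]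

lemma F1_deriv {u v : ℕ → ℝ → ℝ → ℂ} (h : ThFlow u v) {ρ : ℝ} (hρ : 1 < ρ) {K : ℝ}
    (hK : ∀ y, P u v 0 ρ y ≤ K) :
    ∃ d, HasDerivAt (F u v 1) d ρ ∧ d ≤ ρ⁻¹ * (12 * K * F u v 1 ρ) := by
  obtain ⟨d, h1, h2⟩ := F_deriv h 1 (by norm_num) hρ
  refine ⟨d, h1, ?_⟩
  have := h2 (fun y => 12 * K * P u v 1 ρ y) ((dec_P h 1 hρ.le).const_mul _).integrable ?_
  · rwa [integral_const_mul] at this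
  · intro y
    have hl := norm_le_sqrtP_left u v (ρ := ρ) (y := y)
    have hr := norm_le_sqrtP_right u v (ρ := ρ) (y := y)
    refine (prod_le u v 1 ρ y (norm_NL1 _ _ (fun k => √(P u v k ρ y)) hl hr)
      (norm_NL1 _ _ (fun k => √(P u v k ρ y)) hr hl)).trans ?_
    have q0 := Real.sq_sqrt (P_nonneg u v 0 ρ y)
    have q1 := Real.sq_sqrt (P_nonneg u v 1 ρ y)
    have hK' := hK y
    rw [q0]
    have : 4 * √(P u v 1 ρ y) * (3 * P u v 0 ρ y * √(P u v 1 ρ y))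
      = 12 * P u v 0 ρ y * √(P u v 1 ρ y) ^ 2 := by ring
    rw [this, q1]
    have := P_nonneg u v 1 ρ y
    gcongr

lemma F2_deriv {u v : ℕ → ℝ → ℝ → ℂ} (h : ThFlow u v) {ρ : ℝ} (hρ : 1 < ρ) {K : ℝ}
    (hK : ∀ y, P u v 0 ρ y ≤ K) :
    ∃ d, HasDerivAt (F u v 2) d ρ ∧ d ≤ ρ⁻¹ * (132 * K * F u v 2 ρ) := by
  obtain ⟨d, h1, h2⟩ := F_deriv h 2 (by norm_num) hρ
  refine ⟨d, h1, ?_⟩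
  have hsq : Dec (fun z => (P u v 1 ρ z) ^ 2) := by
    simpa only [sq] using (dec_P h 1 hρ.le).mul (dec_P h 1 hρ.le)
  have i1 := (dec_P h 2 hρ.le).const_mul (24 * K)
  have i2 := hsq.const_mul 12
  have := h2 (fun y => 24 * K * P u v 2 ρ y + 12 * P u v 1 ρ y ^ 2) (i1.add i2).integrable ?_
  · rw [integral_add i1.integrable i2.integrable, integral_const_mul, integral_const_mul] at this
    refine this.trans ?_
    have g := gn_W (h.hu.sl hρ.le) (h.hv.sl hρ.le) hK
    change ∫ z, (P u v 1 ρ z) ^ 2 ≤ 9 * K * F u v 2 ρ at g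
    change ρ⁻¹ * (24 * K * F u v 2 ρ + _) ≤ _
    apply mul_le_mul_of_nonneg_left _ (by positivity)
    linarith
  · intro y
    have hl := norm_le_sqrtP_left u v (ρ := ρ) (y := y)
    have hr := norm_le_sqrtP_right u v (ρ := ρ) (y := y)
    refine (prod_le u v 2 ρ y (norm_NL2 _ _ (fun k => √(P u v k ρ y)) hl hr)
      (norm_NL2 _ _ (fun k => √(P u v k ρ y)) hr hl)).trans ?_
    have q0 := Real.sq_sqrt (P_nonneg u v 0 ρ y)
    have q1 := Real.sq_sqrt (P_nonneg u v 1 ρ y)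
    have q2 := Real.sq_sqrt (P_nonneg u v 2 ρ y)
    have hK' := hK y
    rw [← q0] at hK'
    rw [← q1, ← q2, Real.sqrt_sq (Real.sqrt_nonneg _), Real.sqrt_sq (Real.sqrt_nonneg _)]
    generalize √(P u v 0 ρ y) = n0 at *
    generalize √(P u v 1 ρ y) = n1 at *
    generalize √(P u v 2 ρ y) = n2 at *
    nlinarith [mul_nonneg (sub_nonneg.2 hK') (sq_nonneg n2), sq_nonneg (n1 ^ 2 - n0 * n2)]

lemma F3_deriv {u v : ℕ → ℝ → ℝ → ℂ} (h : ThFlow u v) {ρ : ℝ} (hρ : 1 < ρ) {K m : ℝ} (hK0 : 0 < K)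
    (hK : ∀ y, P u v 0 ρ y ≤ K) (hm : ∀ y, P u v 1 ρ y ≤ m) :
    ∃ d, HasDerivAt (F u v 3) d ρ ∧
      d ≤ ρ⁻¹ * (60 * K * F u v 3 ρ + 36 * m * F u v 2 ρ + 12 * K⁻¹ * m ^ 2 * F u v 1 ρ) := by
  obtain ⟨d, h1, h2⟩ := F_deriv h 3 (by norm_num) hρ
  refine ⟨d, h1, ?_⟩
  have i1 := (dec_P h 3 hρ.le).const_mul (60 * K)
  have i2 := (dec_P h 2 hρ.le).const_mul (36 * m)
  have i3 := (dec_P h 1 hρ.le).const_mul (12 * K⁻¹ * m ^ 2)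
  have := h2 (fun y => 60 * K * P u v 3 ρ y + 36 * m * P u v 2 ρ y +
    12 * K⁻¹ * m ^ 2 * P u v 1 ρ y) ((i1.add i2).add i3).integrable ?_
  · rw [integral_add (i1.add i2).integrable i3.integrable, integral_add i1.integrable i2.integrable,
      integral_const_mul, integral_const_mul, integral_const_mul] at this
    exact this
  · intro y
    have hl := norm_le_sqrtP_left u v (ρ := ρ) (y := y)
    have hr := norm_le_sqrtP_right u v (ρ := ρ) (y := y)
    refine (prod_le u v 3 ρ y (norm_NL3 _ _ (fun k => √(P u v k ρ y)) hl hr)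
      (norm_NL3 _ _ (fun k => √(P u v k ρ y)) hr hl)).trans ?_
    have q0 := Real.sq_sqrt (P_nonneg u v 0 ρ y)
    have q1 := Real.sq_sqrt (P_nonneg u v 1 ρ y)
    have q2 := Real.sq_sqrt (P_nonneg u v 2 ρ y)
    have q3 := Real.sq_sqrt (P_nonneg u v 3 ρ y)
    have hK' := hK y
    have hm' := hm y
    rw [← q0] at hK'
    rw [← q1] at hm'
    rw [← q1, ← q2, ← q3, Real.sqrt_sq (Real.sqrt_nonneg _), Real.sqrt_sq (Real.sqrt_nonneg _),
      Real.sqrt_sq (Real.sqrt_nonneg _)]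
    generalize √(P u v 0 ρ y) = n0 at *
    generalize √(P u v 1 ρ y) = n1 at *
    generalize √(P u v 2 ρ y) = n2 at *
    generalize √(P u v 3 ρ y) = n3 at *
    have t1 : n0 ^ 2 * n3 ^ 2 ≤ K * n3 ^ 2 := mul_le_mul_of_nonneg_right hK' (sq_nonneg _)
    have t2 : n1 ^ 2 * n2 ^ 2 ≤ m * n2 ^ 2 := mul_le_mul_of_nonneg_right hm' (sq_nonneg _)
    have t3 : 2 * (n1 ^ 3 * n3) ≤ K * n3 ^ 2 + K⁻¹ * n1 ^ 4 * n1 ^ 2 := by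
      have : K * n3 ^ 2 + K⁻¹ * n1 ^ 4 * n1 ^ 2 - 2 * (n1 ^ 3 * n3)
        = K⁻¹ * (K * n3 - n1 ^ 3) ^ 2 := by field_simp; ring
      have h5 : 0 ≤ K⁻¹ * (K * n3 - n1 ^ 3) ^ 2 := by positivity
      linarith
    have t4 : K⁻¹ * n1 ^ 4 * n1 ^ 2 ≤ K⁻¹ * m ^ 2 * n1 ^ 2 := by
      have : n1 ^ 4 ≤ m ^ 2 := by
        have := pow_le_pow_left₀ (sq_nonneg n1) hm' 2
        linarith [this, (by ring : (n1 ^ 2) ^ 2 = n1 ^ 4)]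
      gcongr
    nlinarith [sq_nonneg (n0 * n3 - n1 * n2)]

lemma energies {u v : ℕ → ℝ → ℝ → ℂ} (h : ThFlow u v) {T e : ℝ} (he1 : e ≤ 1)
    (hF : ∀ k < 4, F u v k 1 ≤ e) (hK : ∀ ρ ∈ Set.Icc 1 T, ∀ y, P u v 0 ρ y ≤ 1 / 1056) :
    ∀ ρ ∈ Set.Icc 1 T, ∀ k < 4, F u v k ρ ≤ 203041 * e * ρ ^ (1 / 2 : ℝ) := by
  have he : 0 ≤ e := (F_nonneg u v 0 1).trans (hF 0 (by norm_num))
  have low : ∀ k < 3, ∀ ρ ∈ Set.Icc 1 T, F u v k ρ ≤ e * ρ ^ (1 / 8 : ℝ) := by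
    intro k hk ρ hρ
    have := gron (F_cont h k T) (B := 0) (b := 1) (δ := 1 / 8) (fun s hs => ?_) (by norm_num) le_rfl
      ρ hρ
    · refine this.trans ?_
      have := hF k (by omega)
      have : 0 < ρ := by linarith [hρ.1]
      simp only [zero_div, zero_mul, add_zero]
      gcongr
    · have hK' := hK s ⟨hs.1.le, hs.2.le⟩
      have hs0 : 0 < s := by linarith [hs.1]
      have hn := F_nonneg u v k s
      have : ∃ d, HasDerivAt (F u v k) d s ∧ d ≤ s⁻¹ * (132 * (1 / 1056) * F u v k s) := by
        interval_cases k
        · obtain ⟨d, h1, h2⟩ := F0_deriv h hs.1 hK'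
          refine ⟨d, h1, h2.trans ?_⟩
          gcongr; norm_num
        · obtain ⟨d, h1, h2⟩ := F1_deriv h hs.1 hK'
          refine ⟨d, h1, h2.trans ?_⟩
          gcongr; norm_num
        · exact F2_deriv h hs.1 hK'
      obtain ⟨d, h1, h2⟩ := this
      refine ⟨d, h1, h2.trans (le_of_eq ?_)⟩
      ring
  have hi : F u v 3 1 ≤ e := hF 3 (by norm_num)
  have high : ∀ ρ ∈ Set.Icc 1 T, F u v 3 ρ ≤ 203041 * e * ρ ^ (3 / 8 : ℝ) := by
    intro ρ hρ
    have := gron (F_cont h 3 T) (B := 50760 * e) (b := 3 / 8) (δ := 1 / 8) (fun s hs => ?_)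
      (by norm_num) (by positivity) ρ hρ
    · refine this.trans ?_
      have hl : ρ ^ (1 / 8 : ℝ) ≤ ρ ^ (3 / 8 : ℝ) :=
        Real.rpow_le_rpow_of_exponent_le hρ.1 (by norm_num)
      have h0 : 0 ≤ ρ ^ (1 / 8 : ℝ) := Real.rpow_nonneg (by linarith [hρ.1]) _
      have h2 := mul_le_mul_of_nonneg_right hi h0
      have h3 := mul_le_mul_of_nonneg_left hl he
      norm_num at *
      linarith
    · have hs' : s ∈ Set.Icc 1 T := ⟨hs.1.le, hs.2.le⟩
      have hs0 : 0 < s := by linarith [hs.1]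
      have l1 := low 1 (by norm_num) s hs'
      have l2 := low 2 (by norm_num) s hs'
      obtain ⟨d, h1, h2⟩ := F3_deriv h hs.1 (K := 1 / 1056) (m := 2 * (e * s ^ (1 / 8 : ℝ)))
        (by norm_num) (hK s hs') (fun y => by
          have := sup_P h 1 hs.1.le y
          norm_num at *
          linarith)
      refine ⟨d, h1, h2.trans ?_⟩
      have e3 : s ^ (3 / 8 : ℝ) = (s ^ (1 / 8 : ℝ)) ^ 3 := by
        rw [← Real.rpow_natCast, ← Real.rpow_mul hs0.le]; norm_num
      rw [e3]
      have hr1 : 1 ≤ s ^ (1 / 8 : ℝ) := Real.one_le_rpow hs.1.le (by norm_num)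
      generalize s ^ (1 / 8 : ℝ) = r at *
      have hn := F_nonneg u v 3 s
      have hr0 : 0 ≤ r := by linarith
      apply mul_le_mul_of_nonneg_left _ (by positivity)
      have s1 : 36 * (2 * (e * r)) * F u v 2 s ≤ 36 * (2 * (e * r)) * (e * r) := by gcongr
      have s2 : 12 * (1 / 1056 : ℝ)⁻¹ * (2 * (e * r)) ^ 2 * F u v 1 s ≤
        12 * (1 / 1056 : ℝ)⁻¹ * (2 * (e * r)) ^ 2 * (e * r) := by gcongr
      have s3 : e ^ 2 * r ^ 2 ≤ e * r ^ 3 := by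
        have a1 : e ^ 2 ≤ e := by nlinarith
        have a2 : r ^ 2 ≤ r ^ 3 := pow_le_pow_right₀ hr1 (by norm_num)
        exact mul_le_mul a1 a2 (by positivity) he
      have s4 : e ^ 3 * r ^ 3 ≤ e * r ^ 3 := by
        have a1 : e ^ 3 ≤ e := by nlinarith [mul_nonneg he (sub_nonneg.2 he1)]
        exact mul_le_mul_of_nonneg_right a1 (by positivity)
      norm_num at s2 ⊢
      nlinarith
  intro ρ hρ k hk
  have hl : ρ ^ (1 / 8 : ℝ) ≤ ρ ^ (1 / 2 : ℝ) :=
    Real.rpow_le_rpow_of_exponent_le hρ.1 (by norm_num)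
  have hl' : ρ ^ (3 / 8 : ℝ) ≤ ρ ^ (1 / 2 : ℝ) :=
    Real.rpow_le_rpow_of_exponent_le hρ.1 (by norm_num)
  have h0 : 0 ≤ ρ ^ (1 / 2 : ℝ) := Real.rpow_nonneg (by linarith [hρ.1]) _
  by_cases hk3 : k < 3
  · have := low k hk3 ρ hρ
    nlinarith [mul_le_mul_of_nonneg_left hl he, mul_nonneg he h0]
  · obtain rfl : k = 3 := by omega
    have := high ρ hρ
    nlinarith [mul_le_mul_of_nonneg_left hl' he]

/-! ### The pointwise estimate -/

/-- `Im (a * conj b)` -/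
def im2 (a b : ℂ) : ℝ := a.im * b.re - a.re * b.im

lemma im2_abs (a b : ℂ) : |im2 a b| ≤ ‖a‖ * ‖b‖ := by
  apply abs_le_of_sq_le_sq _ (by positivity)
  rw [mul_pow, ← dt_self, ← dt_self]
  unfold im2 dt
  nlinarith [sq_nonneg (a.re * b.re + a.im * b.im)]

lemma im2_le {a b : ℂ} {m n : ℝ} (ha : ‖a‖ ≤ m) (hb : ‖b‖ ≤ n) : |im2 a b| ≤ m * n :=
  (im2_abs a b).trans (mul_le_mul ha hb (norm_nonneg _) ((norm_nonneg _).trans ha))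

lemma hasDerivAt_im2 {f g : ℝ → ℂ} {f' g' : ℂ} {y : ℝ} (hf : HasDerivAt f f' y)
    (hg : HasDerivAt g g' y) :
    HasDerivAt (fun z => im2 (f z) (g z)) (im2 f' (g y) + im2 (f y) g') y := by
  have := ((hasDerivAt_im hf).mul (hasDerivAt_re hg)).sub ((hasDerivAt_re hf).mul (hasDerivAt_im hg))
  refine this.congr_deriv ?_
  unfold im2; ring

/-- the normal form correction -/
def X (u v : ℕ → ℝ → ℝ → ℂ) (y ρ : ℝ) : ℝ :=
  im2 (v 1 ρ y) (u 0 ρ y) + im2 (v 0 ρ y) (u 1 ρ y)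

lemma X_abs (u v : ℕ → ℝ → ℝ → ℂ) (y ρ : ℝ) : |X u v y ρ| ≤ P u v 0 ρ y + P u v 1 ρ y := by
  have a1 := im2_le (norm_le_sqrtP_right u v 1 ρ y) (norm_le_sqrtP_left u v 0 ρ y)
  have a2 := im2_le (norm_le_sqrtP_right u v 0 ρ y) (norm_le_sqrtP_left u v 1 ρ y)
  have q0 := Real.sq_sqrt (P_nonneg u v 0 ρ y)
  have q1 := Real.sq_sqrt (P_nonneg u v 1 ρ y)
  have := abs_add_le (im2 (v 1 ρ y) (u 0 ρ y)) (im2 (v 0 ρ y) (u 1 ρ y))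
  unfold X
  nlinarith [sq_nonneg (√(P u v 0 ρ y) - √(P u v 1 ρ y))]

lemma hasDerivAt_P0 {u v : ℕ → ℝ → ℝ → ℂ} (h : ThFlow u v) {ρ : ℝ} (hρ : 1 < ρ) (y : ℝ) :
    HasDerivAt (fun s => P u v 0 s y)
      (-ρ⁻¹ * (2 * (dt (u 0 ρ y) (u 1 ρ y) - dt (v 0 ρ y) (v 1 ρ y)))) ρ := by
  have u0 := h.eu 0 (by norm_num) ρ y hρ
  have v0 := h.ev 0 (by norm_num) ρ y hρ
  have e : (fun s => P u v 0 s y) = fun s => dt (u 0 s y) (u 0 s y) + dt (v 0 s y) (v 0 s y) := by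
    funext s; simp only [P, W, dt_self]
  rw [e]
  refine ((hasDerivAt_dt u0 u0).add (hasDerivAt_dt v0 v0)).congr_deriv ?_
  simp only [NL, dt, zero_add, Complex.add_re, Complex.add_im, Complex.mul_re, Complex.mul_im,
    Complex.neg_re, Complex.neg_im, Complex.I_re, Complex.I_im, Complex.ofReal_re,
    Complex.ofReal_im, Complex.conj_re, Complex.conj_im]
  ring

lemma hasDerivAt_X {u v : ℕ → ℝ → ℝ → ℂ} (h : ThFlow u v) {ρ : ℝ} (hρ : 1 < ρ) (y : ℝ) :
    HasDerivAt (X u v y)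
      (2 * (dt (u 0 ρ y) (u 1 ρ y) - dt (v 0 ρ y) (v 1 ρ y)) + ρ⁻¹ * (
        im2 (v 2 ρ y) (u 0 ρ y) + im2 (Complex.I * NL 1 (fun j => v j ρ y) (fun j => u j ρ y)) (u 0 ρ y)
        + (- im2 (v 1 ρ y) (u 1 ρ y)
          + im2 (v 1 ρ y) (Complex.I * NL 0 (fun j => u j ρ y) (fun j => v j ρ y)))
        + (im2 (v 1 ρ y) (u 1 ρ y)
          + im2 (Complex.I * NL 0 (fun j => v j ρ y) (fun j => u j ρ y)) (u 1 ρ y))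
        + (- im2 (v 0 ρ y) (u 2 ρ y)
          + im2 (v 0 ρ y) (Complex.I * NL 1 (fun j => u j ρ y) (fun j => v j ρ y))))) ρ := by
  have u0 := h.eu 0 (by norm_num) ρ y hρ
  have v0 := h.ev 0 (by norm_num) ρ y hρ
  have u1 := h.eu 1 (by norm_num) ρ y hρ
  have v1 := h.ev 1 (by norm_num) ρ y hρ
  refine ((hasDerivAt_im2 v1 u0).add (hasDerivAt_im2 v0 u1)).congr_deriv ?_
  generalize NL 1 (fun j => u j ρ y) (fun j => v j ρ y) = A
  generalize NL 1 (fun j => v j ρ y) (fun j => u j ρ y) = B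
  generalize NL 0 (fun j => u j ρ y) (fun j => v j ρ y) = C
  generalize NL 0 (fun j => v j ρ y) (fun j => u j ρ y) = D
  simp only [im2, dt, zero_add, Nat.reduceAdd, Complex.add_re, Complex.add_im, Complex.mul_re,
    Complex.mul_im, Complex.neg_re, Complex.neg_im, Complex.I_re, Complex.I_im, Complex.ofReal_re,
    Complex.ofReal_im]
  ring

lemma Psi_deriv {u v : ℕ → ℝ → ℝ → ℂ} (h : ThFlow u v) {ρ : ℝ} (hρ : 1 < ρ) (y : ℝ)
    (hP : P u v 0 ρ y ≤ 1) :
    ∃ d, HasDerivAt (fun s => P u v 0 s y + s⁻¹ * X u v y s) d ρ ∧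
      d ≤ (ρ⁻¹) ^ 2 * (6 * P u v 0 ρ y + 7 * P u v 1 ρ y + P u v 2 ρ y) := by
  have hρ0 : ρ ≠ 0 := by linarith
  refine ⟨_, (hasDerivAt_P0 h hρ y).add ((hasDerivAt_inv hρ0).mul (hasDerivAt_X h hρ y)), ?_⟩
  have hl := fun k => norm_le_sqrtP_left u v k (ρ := ρ) (y := y)
  have hr := fun k => norm_le_sqrtP_right u v k (ρ := ρ) (y := y)
  have hX := (abs_le.mp (X_abs u v y ρ)).1
  have nI : ∀ z : ℂ, ‖Complex.I * z‖ = ‖z‖ := fun z => by rw [norm_mul, Complex.norm_I, one_mul]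
  have n0 := norm_NL0 _ _ (fun k => √(P u v k ρ y)) hl hr
  have n0' := norm_NL0 _ _ (fun k => √(P u v k ρ y)) hr hl
  have n1 := norm_NL1 _ _ (fun k => √(P u v k ρ y)) hl hr
  have n1' := norm_NL1 _ _ (fun k => √(P u v k ρ y)) hr hl
  rw [← nI] at n0 n0' n1 n1'
  have b1 := (abs_le.mp (im2_le (hr 2) (hl 0))).2
  have b2 := (abs_le.mp (im2_le n1' (hl 0))).2
  have b3 := (abs_le.mp (im2_le (hr 1) n0)).2
  have b4 := (abs_le.mp (im2_le n0' (hl 1))).2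
  have b5 := (abs_le.mp (im2_le (hr 0) (hl 2))).1
  have b6 := (abs_le.mp (im2_le (hr 0) n1)).2
  have q0 := Real.sq_sqrt (P_nonneg u v 0 ρ y)
  have q1 := Real.sq_sqrt (P_nonneg u v 1 ρ y)
  have q2 := Real.sq_sqrt (P_nonneg u v 2 ρ y)
  have s0 := Real.sqrt_nonneg (P u v 0 ρ y)
  have s1 := Real.sqrt_nonneg (P u v 1 ρ y)
  rw [← q0] at hP
  have c1 : √(P u v 0 ρ y) ^ 3 * √(P u v 1 ρ y) ≤ √(P u v 0 ρ y) * √(P u v 1 ρ y) := by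
    have : √(P u v 0 ρ y) ^ 3 ≤ √(P u v 0 ρ y) := by nlinarith
    gcongr
  have key : - X u v y ρ + (
        im2 (v 2 ρ y) (u 0 ρ y) + im2 (Complex.I * NL 1 (fun j => v j ρ y) (fun j => u j ρ y)) (u 0 ρ y)
        + (- im2 (v 1 ρ y) (u 1 ρ y)
          + im2 (v 1 ρ y) (Complex.I * NL 0 (fun j => u j ρ y) (fun j => v j ρ y)))
        + (im2 (v 1 ρ y) (u 1 ρ y)
          + im2 (Complex.I * NL 0 (fun j => v j ρ y) (fun j => u j ρ y)) (u 1 ρ y))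
        + (- im2 (v 0 ρ y) (u 2 ρ y)
          + im2 (v 0 ρ y) (Complex.I * NL 1 (fun j => u j ρ y) (fun j => v j ρ y))))
      ≤ 6 * P u v 0 ρ y + 7 * P u v 1 ρ y + P u v 2 ρ y := by
    nlinarith [sq_nonneg (√(P u v 0 ρ y) - √(P u v 1 ρ y)),
      sq_nonneg (√(P u v 0 ρ y) - √(P u v 2 ρ y))]
  have := mul_le_mul_of_nonneg_left key (sq_nonneg ρ⁻¹)
  refine le_trans (le_of_eq ?_) this
  rw [inv_pow]
  ring

lemma P_cont {u v : ℕ → ℝ → ℝ → ℂ} (h : ThFlow u v) (k : ℕ) (A y : ℝ) :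
    ContinuousOn (fun s => P u v k s y) (Set.Icc 1 A) := by
  have h1 := (h.hu.c k y).mono (Set.Icc_subset_Ici_self : Set.Icc 1 A ⊆ _)
  have h2 := (h.hv.c k y).mono (Set.Icc_subset_Ici_self : Set.Icc 1 A ⊆ _)
  exact (h1.norm.pow 2).add (h2.norm.pow 2)

lemma X_cont {u v : ℕ → ℝ → ℝ → ℂ} (h : ThFlow u v) (A y : ℝ) :
    ContinuousOn (X u v y) (Set.Icc 1 A) := by
  have h1 := fun k => (h.hu.c k y).mono (Set.Icc_subset_Ici_self : Set.Icc 1 A ⊆ _)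
  have h2 := fun k => (h.hv.c k y).mono (Set.Icc_subset_Ici_self : Set.Icc 1 A ⊆ _)
  have r1 := fun k => Complex.continuous_re.comp_continuousOn (h1 k)
  have i1 := fun k => Complex.continuous_im.comp_continuousOn (h1 k)
  have r2 := fun k => Complex.continuous_re.comp_continuousOn (h2 k)
  have i2 := fun k => Complex.continuous_im.comp_continuousOn (h2 k)
  exact (((i2 1).mul (r1 0)).sub ((r2 1).mul (i1 0))).add (((i2 0).mul (r1 1)).sub ((r2 0).mul (i1 1)))

lemma pointwise {u v : ℕ → ℝ → ℝ → ℂ} (h : ThFlow u v) {T e : ℝ} (he1 : e ≤ 1)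
    (hF : ∀ k < 4, F u v k 1 ≤ e) (hK : ∀ ρ ∈ Set.Icc 1 T, ∀ y, P u v 0 ρ y ≤ 1 / 1056) :
    ∀ ρ ∈ Set.Icc 1 T, ∀ y, P u v 0 ρ y ≤ 13400706 * e := by
  intro ρ hρ y
  have he : 0 ≤ e := (F_nonneg u v 0 1).trans (hF 0 (by norm_num))
  have hE := energies h he1 hF hK
  have hS : ∀ s ∈ Set.Icc 1 T, ∀ k < 3, P u v k s y ≤ 2 * (203041 * e * s ^ (1 / 2 : ℝ)) := by
    intro s hs k hk
    have := sup_P h k hs.1 y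
    linarith [hE s hs k (by omega), hE s hs (k+1) (by omega)]
  have hder : ∀ s ∈ Set.Ioo 1 T, ∃ d, HasDerivAt
      (fun s => P u v 0 s y + s⁻¹ * X u v y s + 56 * 203041 * e * s ^ (-1 / 2 : ℝ)) d s ∧ d ≤ 0 := by
    intro s hs
    have hs' : s ∈ Set.Icc 1 T := ⟨hs.1.le, hs.2.le⟩
    have hs0 : 0 < s := by linarith [hs.1]
    obtain ⟨d, h1, h2⟩ := Psi_deriv h hs.1 y ((hK s hs' y).trans (by norm_num))
    refine ⟨_, h1.add ((Real.hasDerivAt_rpow_const (p := -1 / 2) (Or.inl hs0.ne')).const_mul _), ?_⟩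
    have p0 := hS s hs' 0 (by norm_num)
    have p1 := hS s hs' 1 (by norm_num)
    have p2 := hS s hs' 2 (by norm_num)
    have hb : 6 * P u v 0 s y + 7 * P u v 1 s y + P u v 2 s y ≤
      28 * 203041 * e * s ^ (1 / 2 : ℝ) := by linarith
    have h3 := h2.trans (mul_le_mul_of_nonneg_left hb (sq_nonneg s⁻¹))
    have e1 : (s⁻¹) ^ 2 * s ^ (1 / 2 : ℝ) = s ^ (-1 / 2 - 1 : ℝ) := by
      rw [← Real.rpow_neg_one, ← Real.rpow_natCast, ← Real.rpow_mul hs0.le, ← Real.rpow_add hs0]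
      norm_num
    have e2 : (s⁻¹) ^ 2 * (28 * 203041 * e * s ^ (1 / 2 : ℝ))
      = 28 * 203041 * e * ((s⁻¹) ^ 2 * s ^ (1 / 2 : ℝ)) := by ring
    rw [e2, e1] at h3
    linarith
  have hanti : AntitoneOn (fun s => P u v 0 s y + s⁻¹ * X u v y s
      + 56 * 203041 * e * s ^ (-1 / 2 : ℝ)) (Set.Icc 1 T) := by
    apply antitoneOn_of_deriv_nonpos (convex_Icc 1 T)
    · have hne : ∀ x ∈ Set.Icc 1 T, x ≠ 0 := fun x hx => by
        have := hx.1; intro h0; rw [h0] at this; linarith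
      exact ((P_cont h 0 T y).add ((continuousOn_id.inv₀ hne).mul (X_cont h T y))).add
        (continuousOn_const.mul (continuousOn_id.rpow_const fun x hx => Or.inl (hne x hx)))
    · rw [interior_Icc]
      intro s hs
      obtain ⟨d, h1, _⟩ := hder s hs
      exact h1.differentiableAt.differentiableWithinAt
    · rw [interior_Icc]
      intro s hs
      obtain ⟨d, h1, h2⟩ := hder s hs
      rw [h1.deriv]; exact h2
  have h1T : (1 : ℝ) ∈ Set.Icc 1 T := ⟨le_rfl, hρ.1.trans hρ.2⟩
  have hm := hanti h1T hρ hρ.1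
  simp only [Real.one_rpow, mul_one, inv_one, one_mul] at hm
  have hρ0 : 0 < ρ := by linarith [hρ.1]
  have x1 := (abs_le.mp (X_abs u v y 1)).2
  have a0 := hS 1 h1T 0 (by norm_num)
  have a1 := hS 1 h1T 1 (by norm_num)
  rw [Real.one_rpow] at a0 a1
  have b0 := hS ρ hρ 0 (by norm_num)
  have b1 := hS ρ hρ 1 (by norm_num)
  have x2 := (abs_le.mp (X_abs u v y ρ)).1
  have x3 : -(ρ⁻¹ * X u v y ρ) ≤ 4 * 203041 * e := by
    have t1 : - X u v y ρ ≤ 4 * 203041 * e * ρ := by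
      have : ρ ^ (1 / 2 : ℝ) ≤ ρ := by
        conv_rhs => rw [← Real.rpow_one ρ]
        exact Real.rpow_le_rpow_of_exponent_le hρ.1 (by norm_num)
      nlinarith [mul_le_mul_of_nonneg_left this he]
    have := mul_le_mul_of_nonneg_left t1 (inv_nonneg.2 hρ0.le)
    have e3 : ρ⁻¹ * (4 * 203041 * e * ρ) = 4 * 203041 * e := by field_simp
    linarith
  have : 0 ≤ 56 * 203041 * e * ρ ^ (-1 / 2 : ℝ) := by positivity
  linarith

lemma P_lip {u v : ℕ → ℝ → ℝ → ℂ} (h : ThFlow u v) (A : ℝ) :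
    ∃ L : ℝ, 0 < L ∧ ∀ a ∈ Set.Icc 1 A, ∀ b ∈ Set.Icc 1 A, a ≤ b → ∀ y,
      P u v 0 b y - P u v 0 a y ≤ L * (b - a) := by
  obtain ⟨C0, hC0⟩ := h.hu.dec 0 A
  obtain ⟨C1, hC1⟩ := h.hu.dec 1 A
  obtain ⟨D0, hD0⟩ := h.hv.dec 0 A
  obtain ⟨D1, hD1⟩ := h.hv.dec 1 A
  have red : ∀ {z C y : ℝ}, 0 ≤ z → z * (1 + y ^ 2) ≤ C → z ≤ C := by
    intro z C y hz hh
    nlinarith [mul_nonneg hz (sq_nonneg y)]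
  refine ⟨2 * (|C0| * |C1| + |D0| * |D1|) + 1, by positivity, fun a ha b hb hab y => ?_⟩
  refine Convex.image_sub_le_mul_sub_of_deriv_le (convex_Icc 1 A) (P_cont h 0 A y) ?_ ?_ a ha b hb hab
  · rw [interior_Icc]
    intro s hs
    exact (hasDerivAt_P0 h hs.1 y).differentiableAt.differentiableWithinAt
  · rw [interior_Icc]
    intro s hs
    rw [(hasDerivAt_P0 h hs.1 y).deriv]
    have hs' : s ∈ Set.Icc 1 A := ⟨hs.1.le, hs.2.le⟩
    have c0 := (red (norm_nonneg _) (hC0 s hs' y)).trans (le_abs_self _)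
    have c1 := (red (norm_nonneg _) (hC1 s hs' y)).trans (le_abs_self _)
    have d0 := (red (norm_nonneg _) (hD0 s hs' y)).trans (le_abs_self _)
    have d1 := (red (norm_nonneg _) (hD1 s hs' y)).trans (le_abs_self _)
    have m1 := (dt_abs (u 0 s y) (u 1 s y)).trans (mul_le_mul c0 c1 (norm_nonneg _) (abs_nonneg _))
    have m2 := (dt_abs (v 0 s y) (v 1 s y)).trans (mul_le_mul d0 d1 (norm_nonneg _) (abs_nonneg _))
    have m3 := (abs_le.mp m1).1
    have m4 := (abs_le.mp m2).2
    have i0 : 0 < s⁻¹ := inv_pos.2 (by linarith [hs.1])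
    have i1 : s⁻¹ ≤ 1 := inv_le_one_of_one_le₀ hs.1.le
    have hb : -(2 * (dt (u 0 s y) (u 1 s y) - dt (v 0 s y) (v 1 s y))) ≤
      2 * (|C0| * |C1| + |D0| * |D1|) := by linarith
    have hn : 0 ≤ 2 * (|C0| * |C1| + |D0| * |D1|) := by positivity
    nlinarith [mul_le_mul_of_nonneg_left hb i0.le, mul_le_mul_of_nonneg_right i1 hn]

lemma bootstrap {u v : ℕ → ℝ → ℝ → ℂ} (h : ThFlow u v) {e : ℝ} (he1 : 13400706 * e ≤ 1 / 2112)
    (hF : ∀ k < 4, F u v k 1 ≤ e) :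
    ∀ ρ, 1 ≤ ρ → ∀ y, P u v 0 ρ y ≤ 13400706 * e := by
  intro A hA
  have he : 0 ≤ e := (F_nonneg u v 0 1).trans (hF 0 (by norm_num))
  have hel : e ≤ 1 := by linarith
  obtain ⟨L, hL, hlip⟩ := P_lip h A
  have hind : ∀ n : ℕ, ∀ ρ ∈ Set.Icc 1 (min A (1 + n * (1 / (2112 * L)))), ∀ y,
      P u v 0 ρ y ≤ 1 / 1056 := by
    intro n
    induction n with
    | zero =>
      intro ρ hρ y
      have : ρ = 1 := le_antisymm (by simpa using (hρ.2.trans (min_le_right _ _))) hρ.1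
      subst this
      have := sup_P h 0 le_rfl y
      linarith [hF 0 (by norm_num), hF (0+1) (by norm_num)]
    | succ n ih =>
      intro ρ hρ y
      set b := min A (1 + n * (1 / (2112 * L))) with hb
      have hb1 : 1 ≤ b := le_min hA (by have : 0 ≤ n * (1 / (2112 * L)) := by positivity
                                        linarith)
      by_cases hc : ρ ≤ b
      · exact ih ρ ⟨hρ.1, hc⟩ y
      · push Not at hc
        have p1 := pointwise h hel hF ih b ⟨hb1, le_rfl⟩ y
        have hρA : ρ ≤ A := hρ.2.trans (min_le_left _ _)
        have p2 := hlip b ⟨hb1, min_le_left _ _⟩ ρ ⟨hρ.1, hρA⟩ hc.le y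
        have hbe : b = 1 + n * (1 / (2112 * L)) := by
          rcases min_choice A (1 + n * (1 / (2112 * L))) with h1 | h1
          · rw [← hb] at h1; linarith
          · exact hb.trans h1
        have p3 : ρ - b ≤ 1 / (2112 * L) := by
          have := hρ.2.trans (min_le_right _ _)
          push_cast at this
          rw [hbe]
          linarith
        have p4 := mul_le_mul_of_nonneg_left p3 hL.le
        have p5 : L * (1 / (2112 * L)) = 1 / 2112 := by field_simp
        linarith
  obtain ⟨n, hn⟩ := exists_nat_gt ((A - 1) / (1 / (2112 * L)))
  have hpos : 0 < 1 / (2112 * L) := by positivity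
  rw [div_lt_iff₀ hpos] at hn
  have hm : min A (1 + n * (1 / (2112 * L))) = A := min_eq_left (by linarith)
  have := hind n
  rw [hm] at this
  exact pointwise h hel hF this A ⟨hA, le_rfl⟩

/-! ### From the hypotheses to the flow -/

/-- smooth up to the boundary -/
def Sm (w : ℝ → ℝ → ℂ) : Prop :=
  ContDiffOn ℝ (⊤ : ℕ∞) (fun p : ℝ × ℝ => w p.1 p.2) {p : ℝ × ℝ | 1 ≤ p.1}

lemma half_unique : UniqueDiffOn ℝ {p : ℝ × ℝ | 1 ≤ p.1} := by
  have : {p : ℝ × ℝ | 1 ≤ p.1} = Set.Ici (1:ℝ) ×ˢ Set.univ := by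
    ext p; simp
  rw [this]
  exact (uniqueDiffOn_Ici 1).prod uniqueDiffOn_univ

lemma Sm.hasDerivAt_y' {w : ℝ → ℝ → ℂ} (h : Sm w) {ρ : ℝ} (hρ : 1 ≤ ρ) (y : ℝ) :
    HasDerivAt (w ρ) (fderivWithin ℝ (fun p : ℝ × ℝ => w p.1 p.2) {p : ℝ × ℝ | 1 ≤ p.1} (ρ, y)
      ((0, 1) : ℝ × ℝ)) y := by
  have h1 := ((h.differentiableOn (by simp)) (ρ, y) hρ).hasFDerivWithinAt
  have h2 : HasDerivAt (fun z : ℝ => ((ρ, z) : ℝ × ℝ)) ((0, 1) : ℝ × ℝ) y :=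
    (hasDerivAt_const y ρ).prodMk (hasDerivAt_id y)
  exact h1.comp_hasDerivAt y h2 (Filter.Eventually.of_forall fun z => hρ)

lemma Sm.hasDerivAt_y {w : ℝ → ℝ → ℂ} (h : Sm w) {ρ : ℝ} (hρ : 1 ≤ ρ) (y : ℝ) :
    HasDerivAt (w ρ) (py w ρ y) y :=
  (h.hasDerivAt_y' hρ y).differentiableAt.hasDerivAt

lemma Sm.py {w : ℝ → ℝ → ℂ} (h : Sm w) : Sm (py w) := by
  have h1 := h.fderivWithin half_unique (m := (⊤ : ℕ∞)) (by simp)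
  have h2 := h1.clm_apply (contDiffOn_const (c := ((0, 1) : ℝ × ℝ)))
  exact h2.congr fun p hp => (h.hasDerivAt_y' hp p.2).deriv

lemma Sm.contDiffAt {w : ℝ → ℝ → ℂ} (h : Sm w) {ρ : ℝ} (hρ : 1 < ρ) (y : ℝ) :
    ContDiffAt ℝ (⊤ : ℕ∞) (fun p : ℝ × ℝ => w p.1 p.2) (ρ, y) := by
  apply ContDiffOn.contDiffAt h
  have : {p : ℝ × ℝ | 1 < p.1} ∈ nhds (ρ, y) :=
    (isOpen_lt continuous_const continuous_fst).mem_nhds hρ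
  filter_upwards [this] with p hp
  exact le_of_lt hp

lemma Sm.hasDerivAt_ρ' {w : ℝ → ℝ → ℂ} (h : Sm w) {ρ : ℝ} (hρ : 1 < ρ) (y : ℝ) :
    HasDerivAt (fun s => w s y) (fderiv ℝ (fun p : ℝ × ℝ => w p.1 p.2) (ρ, y)
      ((1, 0) : ℝ × ℝ)) ρ := by
  have h1 := ((h.contDiffAt hρ y).differentiableAt (by simp)).hasFDerivAt
  have h2 : HasDerivAt (fun z : ℝ => ((z, y) : ℝ × ℝ)) ((1, 0) : ℝ × ℝ) ρ :=
    (hasDerivAt_id ρ).prodMk (hasDerivAt_const ρ y)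
  exact h1.comp_hasDerivAt ρ h2

lemma Sm.hasDerivAt_ρ {w : ℝ → ℝ → ℂ} (h : Sm w) {ρ : ℝ} (hρ : 1 < ρ) (y : ℝ) :
    HasDerivAt (fun s => w s y) (pρ w ρ y) ρ :=
  (h.hasDerivAt_ρ' hρ y).differentiableAt.hasDerivAt

lemma Sm.py_eq {w : ℝ → ℝ → ℂ} (h : Sm w) {ρ : ℝ} (hρ : 1 < ρ) (y : ℝ) :
    _root_.py w ρ y = fderiv ℝ (fun p : ℝ × ℝ => w p.1 p.2) (ρ, y) ((0, 1) : ℝ × ℝ) := by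
  have h1 := ((h.contDiffAt hρ y).differentiableAt (by simp)).hasFDerivAt
  have h2 : HasDerivAt (fun z : ℝ => ((ρ, z) : ℝ × ℝ)) ((0, 1) : ℝ × ℝ) y :=
    (hasDerivAt_const y ρ).prodMk (hasDerivAt_id y)
  exact (h1.comp_hasDerivAt y h2).deriv

lemma hasDerivAt_eval {g : ℝ → (ℝ × ℝ →L[ℝ] ℂ)} {g' : ℝ × ℝ →L[ℝ] ℂ} {x : ℝ}
    (h : HasDerivAt g g' x) (a : ℝ × ℝ) : HasDerivAt (fun s => g s a) (g' a) x :=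
  (ContinuousLinearMap.apply ℝ ℂ a).hasFDerivAt.comp_hasDerivAt x h

lemma Sm.comm {w : ℝ → ℝ → ℂ} (h : Sm w) {ρ : ℝ} (hρ : 1 < ρ) (y : ℝ) :
    pρ (_root_.py w) ρ y = _root_.py (pρ w) ρ y := by
  set f : ℝ × ℝ → ℂ := fun p => w p.1 p.2 with hf
  have hc := h.contDiffAt hρ y
  have hsym := hc.isSymmSndFDerivAt (by
    rw [minSmoothness_of_isRCLikeNormedField]
    exact WithTop.coe_le_coe.2 le_top)
  have hd : HasFDerivAt (fderiv ℝ f) (fderiv ℝ (fderiv ℝ f) (ρ, y)) (ρ, y) := by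
    have := hc.fderiv_right (m := (⊤ : ℕ∞)) (by simp)
    exact (this.differentiableAt (by simp)).hasFDerivAt
  have l1 : HasDerivAt (fun z : ℝ => ((z, y) : ℝ × ℝ)) ((1, 0) : ℝ × ℝ) ρ :=
    (hasDerivAt_id ρ).prodMk (hasDerivAt_const ρ y)
  have l2 : HasDerivAt (fun z : ℝ => ((ρ, z) : ℝ × ℝ)) ((0, 1) : ℝ × ℝ) y :=
    (hasDerivAt_const y ρ).prodMk (hasDerivAt_id y)
  have e1 : HasDerivAt (fun s => fderiv ℝ f (s, y) ((0, 1) : ℝ × ℝ))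
      (fderiv ℝ (fderiv ℝ f) (ρ, y) (1, 0) (0, 1)) ρ := by
    exact hasDerivAt_eval (hd.comp_hasDerivAt ρ l1) _
  have e2 : HasDerivAt (fun z => fderiv ℝ f (ρ, z) ((1, 0) : ℝ × ℝ))
      (fderiv ℝ (fderiv ℝ f) (ρ, y) (0, 1) (1, 0)) y := by
    exact hasDerivAt_eval (hd.comp_hasDerivAt y l2) _
  have r1 : pρ (_root_.py w) ρ y = fderiv ℝ (fderiv ℝ f) (ρ, y) (1, 0) (0, 1) := by
    apply HasDerivAt.deriv
    refine e1.congr_of_eventuallyEq ?_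
    filter_upwards [Ioi_mem_nhds hρ] with s hs
    exact h.py_eq hs y
  have r2 : _root_.py (pρ w) ρ y = fderiv ℝ (fderiv ℝ f) (ρ, y) (0, 1) (1, 0) := by
    apply HasDerivAt.deriv
    refine e2.congr_of_eventuallyEq ?_
    filter_upwards with z
    exact (h.hasDerivAt_ρ' hρ z).deriv
  rw [r1, r2]
  exact hsym _ _

lemma Sm.iter {w : ℝ → ℝ → ℂ} (h : Sm w) (k : ℕ) : Sm (_root_.py^[k] w) := by
  induction k with
  | zero => exact h
  | succ k ih => rw [Function.iterate_succ_apply']; exact ih.py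

lemma reg_of {w : ℝ → ℝ → ℂ} (h : Sm w) (hS : SchwartzLocUnif w) : Reg (fun k => py^[k] w) := by
  refine ⟨fun k ρ y hρ => ?_, fun k y => ?_, fun k A => ?_, fun k A => ?_⟩
  · simp only [Function.iterate_succ_apply']
    exact (h.iter k).hasDerivAt_y hρ y
  · exact (h.iter k).continuousOn.comp (f := fun s : ℝ => ((s, y) : ℝ × ℝ))
      (by fun_prop) (fun s hs => hs)
  · obtain ⟨C, hC⟩ := hS 0 k 0 A
    obtain ⟨D, hD⟩ := hS 0 k 2 A
    refine ⟨C + D, fun ρ hρ y => ?_⟩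
    have h1 := hC ρ hρ y
    have h2 := hD ρ hρ y
    simp only [Function.iterate_zero, id, pow_zero, one_mul, sq_abs] at h1 h2
    linarith
  · obtain ⟨C, hC⟩ := hS 1 k 0 A
    refine ⟨C, fun ρ hρ y => ?_⟩
    simpa using hC ρ hρ y

/-- level-`k` equations (with `σ = ±ρ⁻¹` the transport speed) -/
lemma level {U V : ℝ → ℝ → ℂ} (hU : Sm U) (hV : Sm V) (c : ℝ) {ρ : ℝ} (hρ : 1 < ρ)
    (h0 : ∀ y, pρ U ρ y = (c : ℂ) * py U ρ y + Complex.I * V ρ y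
      + Complex.I * ((ρ⁻¹ : ℝ) : ℂ) * (‖V ρ y‖ ^ 2 : ℝ) * U ρ y) (k : ℕ) (hk : k < 4) :
    ∀ y, pρ (py^[k] U) ρ y = (c : ℂ) * py^[k+1] U ρ y + Complex.I * py^[k] V ρ y
      + Complex.I * ((ρ⁻¹ : ℝ) : ℂ) * NL k (fun j => py^[j] U ρ y) (fun j => py^[j] V ρ y) := by
  induction k with
  | zero =>
    intro y
    have := h0 y
    simp only [Function.iterate_zero, id, zero_add, Function.iterate_one, NL]
    rw [this, Complex.mul_conj']
    push_cast
    ring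
  | succ k ih =>
    intro y
    have ih' := ih (by omega)
    have dU : ∀ k y, HasDerivAt (py^[k] U ρ) (py^[k+1] U ρ y) y := fun k y => by
      rw [Function.iterate_succ_apply']; exact (hU.iter k).hasDerivAt_y hρ.le y
    have dV : ∀ k y, HasDerivAt (py^[k] V ρ) (py^[k+1] V ρ y) y := fun k y => by
      rw [Function.iterate_succ_apply']; exact (hV.iter k).hasDerivAt_y hρ.le y
    have e1 : pρ (py^[k+1] U) ρ y = deriv (pρ (py^[k] U) ρ) y := by
      rw [Function.iterate_succ_apply', (hU.iter k).comm hρ y]; rfl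
    have e2 : pρ (py^[k] U) ρ = _ := funext ih'
    rw [e1, e2]
    apply HasDerivAt.deriv
    exact (((dU (k+1) y).const_mul _).add ((dV k y).const_mul _)).add
      ((hasDerivAt_NL (u := fun j => py^[j] U ρ) (v := fun j => py^[j] V ρ) dU dV k
        (by omega) y).const_mul _)

lemma flow_of {U V : ℝ → ℝ → ℂ} (hU : Sm U) (hV : Sm V) (sU : SchwartzLocUnif U)
    (sV : SchwartzLocUnif V) (hT : TransThirring U V) :
    ThFlow (fun k => py^[k] U) (fun k => py^[k] V) := by
  refine ⟨reg_of hU sU, reg_of hV sV, fun k hk ρ y hρ => ?_, fun k hk ρ y hρ => ?_⟩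
  · refine ((hU.iter k).hasDerivAt_ρ hρ y).congr_deriv ?_
    rw [level hU hV (-ρ⁻¹) hρ (fun y => ?_) k hk y]
    · push_cast; rfl
    · have := (hT ρ y hρ.le).1
      push_cast at this ⊢
      linear_combination this
  · refine ((hV.iter k).hasDerivAt_ρ hρ y).congr_deriv ?_
    rw [level hV hU (ρ⁻¹) hρ (fun y => ?_) k hk y]
    have := (hT ρ y hρ.le).2
    linear_combination this

lemma iter_deriv (U : ℝ → ℝ → ℂ) (ρ : ℝ) (k : ℕ) : deriv^[k] (U ρ) = py^[k] U ρ := by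
  induction k with
  | zero => rfl
  | succ k ih => rw [Function.iterate_succ_apply', Function.iterate_succ_apply', ih]; rfl

lemma F_le_Eint {U V : ℝ → ℝ → ℂ} (h : ThFlow (fun k => py^[k] U) (fun k => py^[k] V))
    (k : ℕ) (hk : k < 4) :
    F (fun k => py^[k] U) (fun k => py^[k] V) k 1 ≤ Eint U V 1 ^ 2 := by
  have su := h.hu.sl (le_refl (1:ℝ))
  have sv := h.hv.sl (le_refl (1:ℝ))
  have iu : Integrable (fun y => ‖py^[k] U 1 y‖ ^ 2) := by
    have := (su.dt su k k).integrable
    simpa only [dt_self] using this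
  have iv : Integrable (fun y => ‖py^[k] V 1 y‖ ^ 2) := by
    have := (sv.dt sv k k).integrable
    simpa only [dt_self] using this
  have e : F (fun k => py^[k] U) (fun k => py^[k] V) k 1
      = (∫ y, ‖py^[k] U 1 y‖ ^ 2) + ∫ y, ‖py^[k] V 1 y‖ ^ 2 := integral_add iu iv
  have a0 : 0 ≤ ∫ y, ‖py^[k] U 1 y‖ ^ 2 := integral_nonneg fun _ => by positivity
  have b0 : 0 ≤ ∫ y, ‖py^[k] V 1 y‖ ^ 2 := integral_nonneg fun _ => by positivity
  have le : √(∫ y, ‖py^[k] U 1 y‖ ^ 2) + √(∫ y, ‖py^[k] V 1 y‖ ^ 2) ≤ Eint U V 1 := by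
    unfold Eint
    simp only [iter_deriv]
    exact Finset.single_le_sum (f := fun k => √(∫ y, ‖py^[k] U 1 y‖ ^ 2) +
      √(∫ y, ‖py^[k] V 1 y‖ ^ 2)) (fun i _ => by positivity) (Finset.mem_range.2 hk)
  rw [e]
  have s1 := Real.sqrt_nonneg (∫ y, ‖py^[k] U 1 y‖ ^ 2)
  have s2 := Real.sqrt_nonneg (∫ y, ‖py^[k] V 1 y‖ ^ 2)
  have q1 := Real.sq_sqrt a0
  have q2 := Real.sq_sqrt b0
  have := pow_le_pow_left₀ (add_nonneg s1 s2) le 2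
  nlinarith [mul_nonneg s1 s2]

/-- interior a priori bound: if 𝓔_int(1) is small, then
sup_{ρ ≥ 1} M(ρ) ≲ 𝓔_int(1). -/
theorem interior_a_priori_bound :
    ∃ ε > (0 : ℝ), ∃ C > (0 : ℝ), ∀ U V : ℝ → ℝ → ℂ,
      ContDiffOn ℝ (⊤ : ℕ∞) (fun p : ℝ × ℝ => U p.1 p.2) {p : ℝ × ℝ | 1 ≤ p.1} →
      ContDiffOn ℝ (⊤ : ℕ∞) (fun p : ℝ × ℝ => V p.1 p.2) {p : ℝ × ℝ | 1 ≤ p.1} →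
      SchwartzLocUnif U → SchwartzLocUnif V →
      TransThirring U V →
      Eint U V 1 ≤ ε →
      ∀ ρ : ℝ, 1 ≤ ρ → Mfun U V ρ ≤ C * Eint U V 1 := by
  refine ⟨1 / 200000, by norm_num, 3661, by norm_num, fun U V hU hV sU sV hT hE ρ hρ => ?_⟩
  have h := flow_of hU hV sU sV hT
  have hE0 : 0 ≤ Eint U V 1 := Finset.sum_nonneg fun i _ => by positivity
  have hb := bootstrap h (e := Eint U V 1 ^ 2) (by nlinarith) (F_le_Eint h) ρ hρ
  refine ciSup_le fun y => ?_
  apply Real.sqrt_le_iff.2 ⟨by positivity, ?_⟩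
  have := hb y
  change ‖U ρ y‖ ^ 2 + ‖V ρ y‖ ^ 2 ≤ _ at this
  nlinarith [sq_nonneg (Eint U V 1)]
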